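/- arXiv:1807.06858 — 3 statements merged into one kernel-verified Lean document; each statement's English description precedes it below -/
import Mathlib

section
/- Meeting Time Theorem: for a reversible irreducible finite Markov chain P with nonnegative spectrum started from stationarity, for any t ≥ 0 and any deterministic sequence h_0, h_1, ..., h_t of states, the probability that X_s ≠ h_s for all 0 ≤ s ≤ t is at most (1 − 1/t_hit)^t, where t_hit = max_{y,x} E_y[τ_x]. -/
open Finset

variable {V : Type*}

noncomputable def pip [Fintype V] (pi f g : V → ℝ) : ℝ := ∑ x, pi x * f x * g x

noncomputable def secondEig [Fintype V] (pi : V → ℝ) (P : Matrix V V ℝ) : ℝ :=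
  sSup {r : ℝ | ∃ f : V → ℝ, pip pi f f = 1 ∧ (∑ x, pi x * f x) = 0 ∧ r = pip pi f (P.mulVec f)}

noncomputable def trelT [Fintype V] (pi : V → ℝ) (P : Matrix V V ℝ) : ℝ := 1 / (1 - secondEig pi P)

noncomputable def Dmat [Fintype V] [DecidableEq V] (h : V) : Matrix V V ℝ :=
  Matrix.diagonal fun y => if y = h then 0 else 1

noncomputable def opNorm [Fintype V] (pi : V → ℝ) (A : Matrix V V ℝ) : ℝ :=
  sSup {r : ℝ | ∃ f : V → ℝ, pip pi f f ≤ 1 ∧ r = Real.sqrt (pip pi (A.mulVec f) (A.mulVec f))}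

/-- probability, starting at `y`, that the chain avoids `x` during steps `0..t`
(i.e. `P_y(τ_x > t)`), written as a sum over length-`t` paths. -/
noncomputable def survProb [Fintype V] [DecidableEq V] (P : Matrix V V ℝ) (x y : V) (t : ℕ) : ℝ :=
  ∑ p : Fin (t+1) → V,
    if p 0 = y ∧ (∀ s, p s ≠ x) then ∏ s : Fin t, P (p s.castSucc) (p s.succ) else 0

/-- `Ehit P x y = E_y[τ_x]`, via `E[τ] = ∑_t P(τ > t)`. -/
noncomputable def Ehit [Fintype V] [DecidableEq V] (P : Matrix V V ℝ) (x y : V) : ℝ :=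
  ∑' t : ℕ, survProb P x y t

noncomputable def thit [Fintype V] [DecidableEq V] (P : Matrix V V ℝ) : ℝ :=
  ⨆ q : V × V, Ehit P q.1 q.2

/-- expected hitting time of `x` when the initial state has law `μ`. -/
noncomputable def EhitFrom [Fintype V] [DecidableEq V] (P : Matrix V V ℝ) (μ : V → ℝ) (x : V) : ℝ :=
  ∑' t : ℕ, ∑ y, μ y * survProb P x y t

/-- probability, starting from `pi`, that `X_s ≠ h s` for all `0 ≤ s ≤ t`. -/
noncomputable def avoidProb [Fintype V] [DecidableEq V] (pi : V → ℝ) (P : Matrix V V ℝ)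
    (t : ℕ) (h : Fin (t+1) → V) : ℝ :=
  ∑ p : Fin (t+1) → V,
    if ∀ s, p s ≠ h s then pi (p 0) * ∏ s : Fin t, P (p s.castSucc) (p s.succ) else 0

/-- expected number of visits to `x` strictly before hitting `A`, started at `x`. -/
noncomputable def visitsBeforeHit [Fintype V] [DecidableEq V] (P : Matrix V V ℝ)
    (A : Finset V) (x : V) : ℝ :=
  ∑' t : ℕ, ∑ p : Fin (t+1) → V,
    if p 0 = x ∧ p (Fin.last t) = x ∧ (∀ s, p s ∉ A) then
      ∏ s : Fin t, P (p s.castSucc) (p s.succ) else 0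

noncomputable def lazyP [Fintype V] [DecidableEq V] (G : SimpleGraph V) [DecidableRel G.Adj] :
    Matrix V V ℝ :=
  Matrix.of fun x y => if x = y then 1/2 else if G.Adj x y then 1/(2 * (G.degree x : ℝ)) else 0

noncomputable def lazyPi [Fintype V] [DecidableEq V] (G : SimpleGraph V) [DecidableRel G.Adj] :
    V → ℝ :=
  fun x => (G.degree x : ℝ) / ∑ v, (G.degree v : ℝ)

noncomputable def dminR [Fintype V] [Nonempty V] [DecidableEq V] (G : SimpleGraph V)
    [DecidableRel G.Adj] : ℝ :=
  Finset.univ.inf' Finset.univ_nonempty fun v => (G.degree v : ℝ)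

noncomputable def davgR [Fintype V] [DecidableEq V] (G : SimpleGraph V) [DecidableRel G.Adj] : ℝ :=
  (∑ v, (G.degree v : ℝ)) / Fintype.card V

noncomputable def Pstar [Fintype V] [DecidableEq V] (pi : V → ℝ) (γ : ℝ) : Matrix V V ℝ :=
  Matrix.of fun x y => (1 - γ) * (if x = y then 1 else 0) + γ * pi y

/-- Probability, starting from `y`, that `X_s ≠ h s` for all `0 ≤ s ≤ t`. -/
noncomputable def avoidFrom [Fintype V] [DecidableEq V] (P : Matrix V V ℝ)
    (t : ℕ) (h : Fin (t + 1) → V) (y : V) : ℝ :=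
  ∑ p : Fin (t + 1) → V,
    if p 0 = y ∧ (∀ s, p s ≠ h s) then ∏ s : Fin t, P (p s.castSucc) (p s.succ) else 0

section Avoid

variable [Fintype V] [DecidableEq V]

lemma avoidProb_eq_sum (pi : V → ℝ) (P : Matrix V V ℝ) (t : ℕ) (h : Fin (t + 1) → V) :
    avoidProb pi P t h = ∑ y, pi y * avoidFrom P t h y := by
  simp only [avoidProb, avoidFrom, mul_sum]
  rw [sum_comm]
  refine sum_congr rfl fun p _ => ?_
  rw [sum_eq_single (p 0)]
  · simp
  · intro y _ hy
    simp [hy.symm]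
  · simp

lemma avoidFrom_zero (P : Matrix V V ℝ) (h : Fin 1 → V) (y : V) :
    avoidFrom P 0 h y = if y = h 0 then 0 else 1 := by
  rw [avoidFrom, Fintype.sum_equiv (Equiv.funUnique (Fin 1) V) _
    (fun z => if z = y ∧ z ≠ h 0 then 1 else 0)]
  · rw [sum_eq_single y]
    · simp
    · intro z _ hz
      simp [hz]
    · simp
  · intro p
    simp

lemma avoidFrom_succ (P : Matrix V V ℝ) (t : ℕ) (h : Fin (t + 2) → V) (y : V) :
    avoidFrom P (t + 1) h y =
      if y = h 0 then 0 else P.mulVec (avoidFrom P t (fun s => h s.succ)) y := by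
  have key : avoidFrom P (t + 1) h y = ∑ x : V, ∑ q : Fin (t + 1) → V,
      if x = y ∧ x ≠ h 0 ∧ (∀ s, q s ≠ h s.succ) then
        P x (q 0) * ∏ s : Fin t, P (q s.castSucc) (q s.succ) else 0 := by
    rw [avoidFrom, ← Fintype.sum_prod_type',
      Fintype.sum_equiv (Fin.consEquiv fun _ : Fin (t + 2) => V).symm]
    intro p
    simp [Fin.consEquiv, Fin.forall_fin_succ, Fin.prod_univ_succ, Fin.tail]
  rw [key, sum_eq_single y]
  · split_ifs with hy
    · simp [hy]
    · simp only [Matrix.mulVec, dotProduct, avoidFrom, mul_sum]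
      rw [sum_comm]
      refine sum_congr rfl fun q _ => ?_
      rw [sum_eq_single (q 0)]
      · simp [hy]
      · intro z _ hz
        simp [hz.symm]
      · simp
  · intro x _ hx
    simp [hx]
  · simp

end Avoid

section Hitting

variable [Fintype V] [DecidableEq V] {P : Matrix V V ℝ}

lemma survProb_zero (P : Matrix V V ℝ) (x y : V) :
    survProb P x y 0 = if y = x then 0 else 1 :=
  avoidFrom_zero P (fun _ => x) y

lemma survProb_succ (P : Matrix V V ℝ) (x y : V) (t : ℕ) :
    survProb P x y (t + 1) = if y = x then 0 else ∑ z, P y z * survProb P x z t :=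
  avoidFrom_succ P t (fun _ => x) y

lemma survProb_self (P : Matrix V V ℝ) (x : V) (t : ℕ) : survProb P x x t = 0 := by
  cases t <;> simp [survProb_zero, survProb_succ]

lemma survProb_nonneg (hP : ∀ x y, 0 ≤ P x y) (x y : V) (t : ℕ) : 0 ≤ survProb P x y t := by
  refine sum_nonneg fun p _ => ?_
  split_ifs
  · exact prod_nonneg fun _ _ => hP _ _
  · rfl

lemma pow_apply_le_one (hP : ∀ x y, 0 ≤ P x y) (hrow : ∀ x, ∑ y, P x y = 1) (x : V) (t : ℕ) :
    ∀ y, (P ^ t) y x ≤ 1 := by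
  induction t with
  | zero =>
    intro y
    simp only [pow_zero, Matrix.one_apply]
    split_ifs <;> norm_num
  | succ t ih =>
    intro y
    rw [pow_succ', Matrix.mul_apply, ← hrow y]
    exact sum_le_sum fun z _ => mul_le_of_le_one_right (hP y z) (ih z)

lemma survProb_add_pow_le_one (hP : ∀ x y, 0 ≤ P x y) (hrow : ∀ x, ∑ y, P x y = 1) (x : V)
    (t : ℕ) : ∀ y, survProb P x y t + (P ^ t) y x ≤ 1 := by
  induction t with
  | zero =>
    intro y
    simp only [survProb_zero, pow_zero, Matrix.one_apply]
    split_ifs <;> norm_num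
  | succ t ih =>
    intro y
    rw [survProb_succ]
    split_ifs with hy
    · simpa using pow_apply_le_one hP hrow x (t + 1) y
    · rw [pow_succ', Matrix.mul_apply, ← sum_add_distrib, ← hrow y]
      refine sum_le_sum fun z _ => ?_
      rw [← mul_add]
      exact mul_le_of_le_one_right (hP y z) (ih z)

lemma pow_apply_nonneg (hP : ∀ x y, 0 ≤ P x y) (x : V) (t : ℕ) : ∀ y, 0 ≤ (P ^ t) y x := by
  induction t with
  | zero =>
    intro y
    simp only [pow_zero, Matrix.one_apply]
    split_ifs <;> norm_num
  | succ t ih =>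
    intro y
    rw [pow_succ', Matrix.mul_apply]
    exact sum_nonneg fun z _ => mul_nonneg (hP y z) (ih z)

lemma survProb_le_one (hP : ∀ x y, 0 ≤ P x y) (hrow : ∀ x, ∑ y, P x y = 1) (x y : V) (t : ℕ) :
    survProb P x y t ≤ 1 := by
  linarith [survProb_add_pow_le_one hP hrow x t y, pow_apply_nonneg hP x t y]

/-- Domination of survival probabilities at a time `n` propagates to all later times. -/
lemma survProb_add_le_mul (hP : ∀ x y, 0 ≤ P x y) {x : V} {n : ℕ} {c : ℝ}
    (hc : ∀ y, survProb P x y n ≤ c * survProb P x y 0) (t : ℕ) :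
    ∀ y, survProb P x y (t + n) ≤ c * survProb P x y t := by
  induction t with
  | zero => simpa using hc
  | succ t ih =>
    intro y
    rw [Nat.add_right_comm, survProb_succ, survProb_succ]
    split_ifs
    · simp
    · rw [mul_sum]
      refine sum_le_sum fun z _ => ?_
      rw [mul_left_comm]
      exact mul_le_mul_of_nonneg_left (ih z) (hP y z)

lemma survProb_antitone (hP : ∀ x y, 0 ≤ P x y) (hrow : ∀ x, ∑ y, P x y = 1) (x y : V) :
    Antitone (survProb P x y) := by
  refine antitone_nat_of_succ_le fun t => ?_
  have h := survProb_add_le_mul (n := 1) (c := 1) hP (x := x) (fun y => ?_) t y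
  · simpa using h
  · rw [one_mul, survProb_zero]
    split_ifs with hy
    · simp [hy, survProb_self]
    · exact survProb_le_one hP hrow x y 1

lemma exists_survProb_le_mul (hP : ∀ x y, 0 ≤ P x y) (hrow : ∀ x, ∑ y, P x y = 1)
    (hirr : ∀ x y, ∃ t : ℕ, 0 < (P ^ t) x y) (x : V) :
    ∃ n : ℕ, ∃ c < 1, ∀ y, survProb P x y n ≤ c * survProb P x y 0 := by
  choose T hT using fun y => hirr y x
  set n := univ.sup T
  have hlt : ∀ y, survProb P x y n < 1 := fun y =>
    (survProb_antitone hP hrow x y (le_sup (mem_univ y))).trans_lt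
      (by linarith [survProb_add_pow_le_one hP hrow x (T y) y, hT y])
  refine ⟨n, univ.sup' (univ_nonempty_iff.2 ⟨x⟩) fun y => survProb P x y n, ?_, fun y => ?_⟩
  · exact (sup'_lt_iff _).2 fun y _ => hlt y
  · rw [survProb_zero]
    split_ifs with hy
    · simp [hy, survProb_self]
    · rw [mul_one]
      exact le_sup' (fun y => survProb P x y n) (mem_univ y)

lemma summable_survProb (hP : ∀ x y, 0 ≤ P x y) (hrow : ∀ x, ∑ y, P x y = 1)
    (hirr : ∀ x y, ∃ t : ℕ, 0 < (P ^ t) x y) (x y : V) : Summable (survProb P x y) := by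
  obtain ⟨n, c, hc, h⟩ := exists_survProb_le_mul hP hrow hirr x
  refine summable_of_sum_range_le (c := n / (1 - c)) (survProb_nonneg hP x y) fun N => ?_
  rw [le_div_iff₀ (by linarith)]
  have h1 : ∑ t ∈ range N, survProb P x y t ≤ ∑ t ∈ range (n + N), survProb P x y t :=
    sum_le_sum_of_subset_of_nonneg (range_mono (Nat.le_add_left N n))
      fun t _ _ => survProb_nonneg hP x y t
  have h2 : ∑ t ∈ range n, survProb P x y t ≤ n := by
    simpa using sum_le_card_nsmul (range n) _ 1 fun t _ => survProb_le_one hP hrow x y t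
  have h3 : ∑ t ∈ range N, survProb P x y (n + t) ≤ c * ∑ t ∈ range N, survProb P x y t := by
    rw [mul_sum]
    refine sum_le_sum fun t _ => ?_
    rw [add_comm]
    exact survProb_add_le_mul hP h t y
  rw [sum_range_add] at h1
  linarith

lemma Ehit_self (P : Matrix V V ℝ) (x : V) : Ehit P x x = 0 := by
  simp [Ehit, survProb_self]

lemma Ehit_nonneg (hP : ∀ x y, 0 ≤ P x y) (x y : V) : 0 ≤ Ehit P x y :=
  tsum_nonneg (survProb_nonneg hP x y)

lemma Ehit_eq_one_add (hP : ∀ x y, 0 ≤ P x y) (hrow : ∀ x, ∑ y, P x y = 1)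
    (hirr : ∀ x y, ∃ t : ℕ, 0 < (P ^ t) x y) {x y : V} (hy : y ≠ x) :
    Ehit P x y = 1 + P.mulVec (Ehit P x) y := by
  have hs := summable_survProb hP hrow hirr x
  simp only [Ehit, Matrix.mulVec, dotProduct]
  rw [(hs y).tsum_eq_zero_add, survProb_zero, if_neg hy]
  simp only [survProb_succ, if_neg hy]
  rw [Summable.tsum_finsetSum fun z _ => (hs z).mul_left _]
  simp only [tsum_mul_left]

lemma one_le_Ehit (hP : ∀ x y, 0 ≤ P x y) (hrow : ∀ x, ∑ y, P x y = 1)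
    (hirr : ∀ x y, ∃ t : ℕ, 0 < (P ^ t) x y) {x y : V} (hy : y ≠ x) : 1 ≤ Ehit P x y := by
  rw [Ehit_eq_one_add hP hrow hirr hy]
  exact le_add_of_nonneg_right (sum_nonneg fun z _ => mul_nonneg (hP y z) (Ehit_nonneg hP x z))

lemma Ehit_le_thit (P : Matrix V V ℝ) (x y : V) : Ehit P x y ≤ thit P :=
  le_ciSup (f := fun q : V × V => Ehit P q.1 q.2) (Set.finite_range _).bddAbove (x, y)

lemma one_sub_inv_thit_nonneg (hP : ∀ x y, 0 ≤ P x y) (hrow : ∀ x, ∑ y, P x y = 1)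
    (hirr : ∀ x y, ∃ t : ℕ, 0 < (P ^ t) x y) : 0 ≤ 1 - 1 / thit P := by
  rcases subsingleton_or_nontrivial V with hV | hV
  · have h0 : thit P = 0 := by
      have : ∀ q : V × V, Ehit P q.1 q.2 = 0 := fun q => by
        rw [Subsingleton.elim q.2 q.1, Ehit_self]
      simp [thit, this]
    simp [h0]
  · obtain ⟨x, y, hxy⟩ := exists_pair_ne V
    have h1 := (one_le_Ehit hP hrow hirr hxy.symm).trans (Ehit_le_thit P x y)
    rw [sub_nonneg, div_le_one (by linarith)]
    exact h1

lemma mulVec_Ehit_le (hP : ∀ x y, 0 ≤ P x y) (hrow : ∀ x, ∑ y, P x y = 1)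
    (hirr : ∀ x y, ∃ t : ℕ, 0 < (P ^ t) x y) {x y : V} (hy : y ≠ x) :
    P.mulVec (Ehit P x) y ≤ (1 - 1 / thit P) * Ehit P x y := by
  have h1 := one_le_Ehit hP hrow hirr hy
  have h2 := Ehit_le_thit P x y
  have h3 : 1 / thit P * Ehit P x y ≤ 1 := by
    rw [one_div_mul_eq_div, div_le_one (by linarith)]
    exact h2
  linarith [Ehit_eq_one_add hP hrow hirr hy]

end Hitting

section Energy

variable [Fintype V] {P : Matrix V V ℝ} {pi : V → ℝ}

lemma pip_mulVec_eq_sum (pi : V → ℝ) (P : Matrix V V ℝ) (f g : V → ℝ) :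
    pip pi f (P.mulVec g) = ∑ x, ∑ y, pi x * P x y * (f x * g y) := by
  simp only [pip, Matrix.mulVec, dotProduct, mul_sum]
  exact sum_congr rfl fun x _ => sum_congr rfl fun y _ => by ring

lemma pip_mulVec_comm (hrev : ∀ x y, pi x * P x y = pi y * P y x) (f g : V → ℝ) :
    pip pi f (P.mulVec g) = pip pi g (P.mulVec f) := by
  rw [pip_mulVec_eq_sum, pip_mulVec_eq_sum, sum_comm]
  exact sum_congr rfl fun x _ => sum_congr rfl fun y _ => by rw [hrev y x, mul_comm (f y)]

/-- Cauchy–Schwarz for the positive semidefinite form `⟨f, P g⟩_π`. -/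
lemma pip_mulVec_sq_le (hrev : ∀ x y, pi x * P x y = pi y * P y x)
    (hpsd : ∀ f : V → ℝ, 0 ≤ pip pi f (P.mulVec f)) (f g : V → ℝ) :
    pip pi f (P.mulVec g) ^ 2 ≤ pip pi f (P.mulVec f) * pip pi g (P.mulVec g) := by
  have h : discrim (pip pi g (P.mulVec g)) (2 * pip pi f (P.mulVec g))
      (pip pi f (P.mulVec f)) ≤ 0 := by
    refine discrim_le_zero fun s => ?_
    refine (hpsd (f + s • g)).trans_eq ?_
    have hc := pip_mulVec_comm hrev f g
    rw [two_mul]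
    nth_rw 2 [hc]
    simp only [pip_mulVec_eq_sum, Pi.add_apply, Pi.smul_apply, smul_eq_mul, mul_add, add_mul,
      sum_add_distrib, sum_mul]
    simp only [← sum_add_distrib]
    exact sum_congr rfl fun x _ => sum_congr rfl fun y _ => by ring
  rw [discrim] at h
  linarith

/-- Schur test: a nonnegative supersolution `u` of `P u ≤ lam u` bounds the energy of every
multiple of `u`. -/
lemma pip_mulVec_mul_le (hP : ∀ x y, 0 ≤ P x y) (hpi : ∀ x, 0 ≤ pi x)
    (hrev : ∀ x y, pi x * P x y = pi y * P y x) {u : V → ℝ} {lam : ℝ} (hu : ∀ x, 0 ≤ u x)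
    (hsuper : ∀ x, u x * P.mulVec u x ≤ u x * (lam * u x)) (k : V → ℝ) :
    pip pi (k * u) (P.mulVec (k * u)) ≤ lam * pip pi (k * u) (k * u) := by
  set w : V → V → ℝ := fun x y => pi x * P x y * (u x * u y)
  have hw : ∀ x y, 0 ≤ w x y := fun x y =>
    mul_nonneg (mul_nonneg (hpi x) (hP x y)) (mul_nonneg (hu x) (hu y))
  have hsymm : ∑ x, ∑ y, w x y * k y ^ 2 = ∑ x, ∑ y, w x y * k x ^ 2 := by
    rw [sum_comm]
    refine sum_congr rfl fun x _ => sum_congr rfl fun y _ => ?_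
    simp only [w]
    rw [hrev y x, mul_comm (u y)]
  calc pip pi (k * u) (P.mulVec (k * u))
      ≤ ∑ x, ∑ y, (w x y * k x ^ 2 + w x y * k y ^ 2) / 2 := by
        rw [pip_mulVec_eq_sum]
        refine sum_le_sum fun x _ => sum_le_sum fun y _ => ?_
        have := mul_nonneg (hw x y) (sq_nonneg (k x - k y))
        simp only [w, Pi.mul_apply] at this ⊢
        linarith
    _ = ∑ x, ∑ y, w x y * k x ^ 2 := by
        simp only [← sum_div, sum_add_distrib, hsymm]
        ring
    _ = ∑ x, pi x * k x ^ 2 * (u x * P.mulVec u x) := by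
        simp only [w, Matrix.mulVec, dotProduct, mul_sum]
        exact sum_congr rfl fun x _ => sum_congr rfl fun y _ => by ring
    _ ≤ ∑ x, pi x * k x ^ 2 * (u x * (lam * u x)) :=
        sum_le_sum fun x _ =>
          mul_le_mul_of_nonneg_left (hsuper x) (mul_nonneg (hpi x) (sq_nonneg _))
    _ = lam * pip pi (k * u) (k * u) := by
        simp only [pip, mul_sum, Pi.mul_apply]
        exact sum_congr rfl fun x _ => by ring

end Energy

section Meeting

variable [Fintype V] [DecidableEq V] {P : Matrix V V ℝ} {pi : V → ℝ}

/-- Spectral bound for the chain killed at `x`. -/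
lemma pip_mulVec_le_of_apply_eq_zero (hP : ∀ x y, 0 ≤ P x y) (hrow : ∀ x, ∑ y, P x y = 1)
    (hpi : ∀ x, 0 ≤ pi x) (hrev : ∀ x y, pi x * P x y = pi y * P y x)
    (hirr : ∀ x y, ∃ t : ℕ, 0 < (P ^ t) x y) {x : V} {f : V → ℝ} (hf : f x = 0) :
    pip pi f (P.mulVec f) ≤ (1 - 1 / thit P) * pip pi f f := by
  have hfu : f = f / Ehit P x * Ehit P x := by
    ext y
    by_cases hy : y = x
    · simp [hy, hf]
    · have := one_le_Ehit hP hrow hirr hy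
      simp [div_mul_cancel₀ _ (by linarith : Ehit P x y ≠ 0)]
  rw [hfu]
  refine pip_mulVec_mul_le hP hpi hrev (Ehit_nonneg hP x) (fun y => ?_) _
  by_cases hy : y = x
  · simp [hy, Ehit_self]
  · exact mul_le_mul_of_nonneg_left (mulVec_Ehit_le hP hrow hirr hy) (Ehit_nonneg hP x y)

/-- Spectral bound for `f` multiplied by the indicator of `{x}ᶜ`. -/
lemma pip_mulVec_kill_le (hP : ∀ x y, 0 ≤ P x y) (hrow : ∀ x, ∑ y, P x y = 1)
    (hpi : ∀ x, 0 ≤ pi x) (hrev : ∀ x y, pi x * P x y = pi y * P y x)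
    (hirr : ∀ x y, ∃ t : ℕ, 0 < (P ^ t) x y) {x : V} {f g : V → ℝ}
    (hg : ∀ y, g y = if y = x then 0 else f y) :
    pip pi g (P.mulVec g) ≤ (1 - 1 / thit P) * pip pi g f := by
  have hgf : pip pi g f = pip pi g g := by
    refine sum_congr rfl fun y _ => ?_
    rw [hg]
    split_ifs <;> simp
  rw [hgf]
  exact pip_mulVec_le_of_apply_eq_zero hP hrow hpi hrev hirr (x := x) (by simp [hg])

lemma pip_kill_one_le_one (hpi : ∀ x, 0 ≤ pi x) (hpisum : ∑ x, pi x = 1) (x : V) {g : V → ℝ}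
    (hg : ∀ y, g y = if y = x then 0 else 1) : pip pi g 1 ≤ 1 := by
  rw [← hpisum]
  refine sum_le_sum fun y _ => ?_
  rw [hg]
  split_ifs
  · simpa using hpi y
  · simp

lemma avoidFrom_energy_le (hP : ∀ x y, 0 ≤ P x y) (hrow : ∀ x, ∑ y, P x y = 1)
    (hpi : ∀ x, 0 ≤ pi x) (hpisum : ∑ x, pi x = 1)
    (hrev : ∀ x y, pi x * P x y = pi y * P y x)
    (hirr : ∀ x y, ∃ t : ℕ, 0 < (P ^ t) x y)
    (hpsd : ∀ f : V → ℝ, 0 ≤ pip pi f (P.mulVec f)) (t : ℕ) :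
    ∀ h : Fin (t + 1) → V, pip pi (avoidFrom P t h) (P.mulVec (avoidFrom P t h)) ≤
      (1 - 1 / thit P) ^ (2 * t + 1) := by
  have hlam := one_sub_inv_thit_nonneg hP hrow hirr
  set lam := 1 - 1 / thit P
  induction t with
  | zero =>
    intro h
    have h1 := pip_mulVec_kill_le hP hrow hpi hrev hirr (f := 1) (avoidFrom_zero P h)
    have h2 := pip_kill_one_le_one hpi hpisum (h 0) (avoidFrom_zero P h)
    simpa only [mul_zero, zero_add, pow_one] using h1.trans (mul_le_of_le_one_right hlam h2)
  | succ t ih =>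
    intro h
    set g := avoidFrom P (t + 1) h
    set g' := avoidFrom P t fun s => h s.succ
    have h1 : pip pi g (P.mulVec g) ≤ lam * pip pi g (P.mulVec g') :=
      pip_mulVec_kill_le hP hrow hpi hrev hirr (avoidFrom_succ P t h)
    have h2 := pip_mulVec_sq_le hrev hpsd g g'
    have h3 : pip pi g (P.mulVec g) ≤ lam ^ 2 * pip pi g' (P.mulVec g') := by
      rcases (hpsd g).eq_or_lt with h0 | h0
      · rw [← h0]
        exact mul_nonneg (sq_nonneg _) (hpsd g')
      · refine le_of_mul_le_mul_left ?_ h0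
        calc pip pi g (P.mulVec g) * pip pi g (P.mulVec g)
            = pip pi g (P.mulVec g) ^ 2 := (sq _).symm
          _ ≤ (lam * pip pi g (P.mulVec g')) ^ 2 := pow_le_pow_left₀ h0.le h1 2
          _ = lam ^ 2 * pip pi g (P.mulVec g') ^ 2 := mul_pow _ _ _
          _ ≤ lam ^ 2 * (pip pi g (P.mulVec g) * pip pi g' (P.mulVec g')) :=
            mul_le_mul_of_nonneg_left h2 (sq_nonneg _)
          _ = _ := by ring
    calc pip pi g (P.mulVec g) ≤ lam ^ 2 * pip pi g' (P.mulVec g') := h3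
      _ ≤ lam ^ 2 * lam ^ (2 * t + 1) := mul_le_mul_of_nonneg_left (ih _) (sq_nonneg _)
      _ = lam ^ (2 * (t + 1) + 1) := by ring

end Meeting

theorem stmt11 [Fintype V] [DecidableEq V] (P : Matrix V V ℝ) (pi : V → ℝ)
    (hP : ∀ x y, 0 ≤ P x y) (hrow : ∀ x, ∑ y, P x y = 1)
    (hpi : ∀ x, 0 < pi x) (hpisum : ∑ x, pi x = 1)
    (hrev : ∀ x y, pi x * P x y = pi y * P y x)
    (hirr : ∀ x y, ∃ t : ℕ, 0 < (P ^ t) x y)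
    (hpsd : ∀ f : V → ℝ, 0 ≤ pip pi f (P.mulVec f)) :
    ∀ (t : ℕ) (h : Fin (t+1) → V),
      avoidProb pi P t h ≤ (1 - 1 / thit P) ^ t := by
  intro t h
  have hpi' := fun x => (hpi x).le
  have hlam := one_sub_inv_thit_nonneg hP hrow hirr
  cases t with
  | zero =>
    have h2 := pip_kill_one_le_one hpi' hpisum (h 0) (avoidFrom_zero P h)
    simpa [avoidProb_eq_sum, pip] using h2
  | succ t =>
    set d : V → ℝ := fun y => if y = h 0 then 0 else 1
    set g := avoidFrom P t fun s => h s.succ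
    have hav : avoidProb pi P (t + 1) h = pip pi d (P.mulVec g) := by
      rw [avoidProb_eq_sum]
      refine sum_congr rfl fun y _ => ?_
      rw [avoidFrom_succ]
      simp only [d]
      split_ifs <;> simp [g]
    have hd : pip pi d (P.mulVec d) ≤ 1 - 1 / thit P :=
      (pip_mulVec_kill_le hP hrow hpi' hrev hirr (f := 1) fun _ => rfl).trans
        (mul_le_of_le_one_right hlam (pip_kill_one_le_one hpi' hpisum (h 0) fun _ => rfl))
    have hg := avoidFrom_energy_le hP hrow hpi' hpisum hrev hirr hpsd t fun s => h s.succ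
    rw [hav]
    refine le_of_sq_le_sq ?_ (pow_nonneg hlam _)
    calc pip pi d (P.mulVec g) ^ 2
        ≤ pip pi d (P.mulVec d) * pip pi g (P.mulVec g) := pip_mulVec_sq_le hrev hpsd d g
      _ ≤ (1 - 1 / thit P) * (1 - 1 / thit P) ^ (2 * t + 1) :=
        mul_le_mul hd hg (hpsd g) hlam
      _ = ((1 - 1 / thit P) ^ (t + 1)) ^ 2 := by ring
end

section
/- For lazy random walk on a finite connected graph with n ≥ 2 vertices, the maximum expected hitting time satisfies t_hit ≤ 20 (d_avg/d_min) n √(t_rel + 1). -/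
open Finset

variable {V : Type*}

namespace LazyWalk

/-- The Dirichlet energy of `g`, each edge being counted in both directions. -/
noncomputable def energy [Fintype V] (G : SimpleGraph V) [DecidableRel G.Adj] (g : V → ℝ) : ℝ :=
  ∑ u, ∑ w, if G.Adj u w then (g u - g w) ^ 2 else 0

section Chain

variable [Fintype V] [DecidableEq V]

lemma survProb_nonneg {P : Matrix V V ℝ} (hP : ∀ a b, 0 ≤ P a b) (x y : V) (t : ℕ) :
    0 ≤ survProb P x y t := by
  unfold survProb
  refine sum_nonneg fun p _ => ?_
  split_ifs
  · exact prod_nonneg fun s _ => hP _ _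
  · exact le_rfl

lemma survProb_self (P : Matrix V V ℝ) (x : V) (t : ℕ) : survProb P x x t = 0 := by
  unfold survProb
  refine sum_eq_zero fun p _ => ?_
  rw [if_neg]
  rintro ⟨h0, h⟩
  exact h 0 h0

lemma survProb_zero (P : Matrix V V ℝ) {x y : V} (hxy : y ≠ x) : survProb P x y 0 = 1 := by
  unfold survProb
  rw [Fintype.sum_eq_single (fun _ => y)]
  · simp [hxy]
  · intro p hp
    rw [if_neg]
    rintro ⟨h0, -⟩
    exact hp (funext fun i => (congrArg p (Fin.fin_one_eq_zero i)).trans h0)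

lemma survProb_succ (P : Matrix V V ℝ) {x y : V} (hxy : y ≠ x) (t : ℕ) :
    survProb P x y (t + 1) = P.mulVec (fun z => survProb P x z t) y := by
  have hL : survProb P x y (t + 1) = ∑ q : Fin (t + 1) → V,
      if ∀ s, q s ≠ x then P y (q 0) * ∏ s : Fin t, P (q s.castSucc) (q s.succ) else 0 := by
    unfold survProb
    rw [← (Fin.consEquiv fun _ : Fin (t + 2) => V).sum_comp, Fintype.sum_prod_type,
      Fintype.sum_eq_single y]
    · refine sum_congr rfl fun q _ => ?_
      simp only [Fin.consEquiv_apply, Fin.forall_fin_succ (n := t + 1), Fin.cons_zero,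
        Fin.cons_succ, Fin.prod_univ_succ (n := t), Fin.castSucc_zero, ← Fin.succ_castSucc]
      simp [hxy]
    · intro a ha
      refine sum_eq_zero fun q _ => ?_
      simp [Fin.consEquiv_apply, ha]
  rw [hL]
  simp only [Matrix.mulVec, dotProduct, survProb, mul_sum]
  rw [sum_comm]
  refine sum_congr rfl fun q _ => ?_
  rw [Fintype.sum_eq_single (q 0)]
  · by_cases h : ∀ s, q s ≠ x <;> simp [h]
  · intro z hz
    simp [Ne.symm hz]

lemma sum_range_survProb_le {P : Matrix V V ℝ} (hP : ∀ a b, 0 ≤ P a b) {x y : V} (hxy : y ≠ x)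
    (T : ℕ) : (∑ t ∈ range T, survProb P x y t)
      ≤ 1 + P.mulVec (fun z => ∑ t ∈ range T, survProb P x z t) y := by
  have h : P.mulVec (fun z => ∑ t ∈ range T, survProb P x z t) y
      = ∑ t ∈ range T, survProb P x y (t + 1) := by
    simp only [survProb_succ P hxy, Matrix.mulVec, dotProduct, mul_sum]
    rw [sum_comm]
  have h1 := sum_range_succ (fun t => survProb P x y t) T
  rw [sum_range_succ', survProb_zero P hxy] at h1
  have := survProb_nonneg hP x y T
  linarith

end Chain

section Energy

variable [Fintype V] (G : SimpleGraph V) [DecidableRel G.Adj]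

lemma energy_nonneg (g : V → ℝ) : 0 ≤ energy G g :=
  sum_nonneg fun u _ => sum_nonneg fun w _ => by split_ifs <;> positivity

lemma energy_neg (g : V → ℝ) : energy G (fun u => -g u) = energy G g := by
  unfold energy
  refine sum_congr rfl fun u _ => sum_congr rfl fun w _ => ?_
  split_ifs <;> ring

lemma energy_sub_const (g : V → ℝ) (c : ℝ) : energy G (fun u => g u - c) = energy G g := by
  simp [energy]

lemma energy_smul (c : ℝ) (g : V → ℝ) : energy G (c • g) = c ^ 2 * energy G g := by
  simp only [energy, mul_sum, Pi.smul_apply, smul_eq_mul]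
  refine sum_congr rfl fun u _ => sum_congr rfl fun w _ => ?_
  split_ifs <;> ring

lemma degree_mul_eq_sum (u : V) (a : ℝ) :
    (G.degree u : ℝ) * a = ∑ w, if G.Adj u w then a else 0 := by
  rw [← sum_filter, sum_const, nsmul_eq_mul, ← G.neighborFinset_eq_filter,
    G.card_neighborFinset_eq_degree]

variable [DecidableEq V]

lemma lazyP_nonneg (a b : V) : 0 ≤ lazyP G a b := by
  simp only [lazyP, Matrix.of_apply]
  split_ifs <;> positivity

lemma degree_mul_sub_lazyP (g : V → ℝ) {u : V} (hu : 0 < (G.degree u : ℝ)) :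
    (G.degree u : ℝ) * (g u - (lazyP G).mulVec g u)
      = (1 / 2) * ∑ w, if G.Adj u w then g u - g w else 0 := by
  have h1 : (lazyP G).mulVec g u
      = g u / 2 + ∑ w, (if G.Adj u w then g w else 0) / (2 * (G.degree u : ℝ)) := by
    have h2 : g u / 2 = ∑ w, if u = w then g w / 2 else 0 := by simp
    simp only [Matrix.mulVec, dotProduct, lazyP, Matrix.of_apply]
    rw [h2, ← sum_add_distrib]
    refine sum_congr rfl fun w _ => ?_
    by_cases h : u = w
    · subst h
      simp
      ring
    · by_cases h' : G.Adj u w <;> simp [h, h']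
      ring
  have h3 : (∑ w, if G.Adj u w then g u - g w else 0)
      = G.degree u * g u - ∑ w, if G.Adj u w then g w else 0 := by
    rw [degree_mul_eq_sum, ← sum_sub_distrib]
    refine sum_congr rfl fun w _ => ?_
    split_ifs <;> ring
  rw [h1, h3, ← sum_div]
  field_simp
  ring

lemma sum_degree_mul_sub_lazyP (hdeg : ∀ u, 0 < (G.degree u : ℝ)) (g : V → ℝ) :
    ∑ u, (G.degree u : ℝ) * (g u * (g u - (lazyP G).mulVec g u)) = energy G g / 4 := by
  have h1 : ∑ u, (G.degree u : ℝ) * (g u * (g u - (lazyP G).mulVec g u))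
      = (1 / 2) * ∑ u, ∑ w, if G.Adj u w then g u * (g u - g w) else 0 := by
    rw [mul_sum]
    refine sum_congr rfl fun u _ => ?_
    rw [mul_left_comm, degree_mul_sub_lazyP G g (hdeg u), mul_left_comm, mul_sum]
    simp only [mul_ite, mul_zero]
  have h2 : (∑ u, ∑ w, if G.Adj u w then g u * (g u - g w) else 0)
      = ∑ u, ∑ w, if G.Adj u w then g w * (g w - g u) else 0 := by
    rw [sum_comm]
    simp only [G.adj_comm]
  have h3 : energy G g = (∑ u, ∑ w, if G.Adj u w then g u * (g u - g w) else 0)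
      + ∑ u, ∑ w, if G.Adj u w then g w * (g w - g u) else 0 := by
    simp only [energy, ← sum_add_distrib]
    refine sum_congr rfl fun u _ => sum_congr rfl fun w _ => ?_
    split_ifs <;> ring
  rw [h1, h3, ← h2]
  ring

end Energy

section Geodesic

lemma exists_geodesic (G : SimpleGraph V) (hconn : G.Connected) (x z : V) :
    ∃ (v : ℕ → V) (L : ℕ), v 0 = x ∧ v L = z ∧ (∀ i < L, G.Adj (v i) (v (i + 1))) ∧ ∀ i ≤ L, G.dist x (v i) = i := by
  obtain ⟨p, hp⟩ := hconn.exists_walk_length_eq_dist x z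
  refine ⟨p.getVert, p.length, p.getVert_zero, p.getVert_length,
    fun i hi => p.adj_getVert_succ hi, fun i hi => ?_⟩
  have h1 := SimpleGraph.dist_le (p.take i)
  have h2 := SimpleGraph.dist_le (p.drop i)
  have h3 := hconn.dist_triangle (u := x) (v := p.getVert i) (w := z)
  rw [SimpleGraph.Walk.take_length] at h1
  rw [SimpleGraph.Walk.drop_length] at h2
  omega

lemma sum_le_of_dist_eq [Fintype V] (G : SimpleGraph V) {x : V} {v : ℕ → V} {L : ℕ}
    (hv : ∀ i ≤ L, G.dist x (v i) = i) {F : V → ℝ} (hF : ∀ u, 0 ≤ F u) : ∑ i ∈ range (L + 1), F (v i) ≤ ∑ u, F u := by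
  classical
  have hinj : Set.InjOn v (range (L + 1)) := by
    intro i hi j hj hij
    simp only [coe_range, Set.mem_Iio] at hi hj
    rw [← hv i (by omega), ← hv j (by omega), hij]
  rw [← sum_image hinj]
  exact sum_le_sum_of_subset_of_nonneg (subset_univ _) fun u _ _ => hF u

variable [Fintype V] (G : SimpleGraph V) [DecidableRel G.Adj]

lemma mul_sq_le {d : ℝ} (hd : ∀ u, d ≤ G.degree u) (g : V → ℝ) (u : V) :
    d * g u ^ 2 ≤ (7 / 4) * (∑ w, if G.Adj u w then g w ^ 2 else 0)
      + (7 / 3) * ∑ w, if G.Adj u w then (g u - g w) ^ 2 else 0 := by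
  calc d * g u ^ 2 ≤ G.degree u * g u ^ 2 := by gcongr; exact hd u
    _ ≤ _ := by
      rw [degree_mul_eq_sum, mul_sum, mul_sum, ← sum_add_distrib]
      refine sum_le_sum fun w _ => ?_
      split_ifs
      · nlinarith [sq_nonneg (3 * g w - 4 * (g u - g w))]
      · simp

lemma mul_sq_le_energy {d : ℝ} (hd : ∀ u, d ≤ G.degree u) (g : V → ℝ) (u : V) :
    d * g u ^ 2 ≤ (7 / 4) * (∑ w, g w ^ 2) + (7 / 3) * energy G g := by
  refine (mul_sq_le G hd g u).trans ?_
  gcongr with w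
  · split_ifs
    · exact le_rfl
    · positivity
  · exact single_le_sum (f := fun u => ∑ w, if G.Adj u w then (g u - g w) ^ 2 else 0)
      (fun u _ => sum_nonneg fun w _ => by split_ifs <;> positivity) (mem_univ u)

lemma mul_sum_geodesic_sq_le (hconn : G.Connected) {d : ℝ} (hd : ∀ u, d ≤ G.degree u)
    (g : V → ℝ) {x : V} {v : ℕ → V} {L : ℕ} (hv : ∀ i ≤ L, G.dist x (v i) = i) :
    d * ∑ i ∈ range (L + 1), g (v i) ^ 2 ≤ (21 / 4) * (∑ u, g u ^ 2) + (7 / 3) * energy G g := by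
  have h1 : d * ∑ i ∈ range (L + 1), g (v i) ^ 2
      ≤ (7 / 4) * (∑ i ∈ range (L + 1), ∑ w, if G.Adj (v i) w then g w ^ 2 else 0)
      + (7 / 3) * ∑ i ∈ range (L + 1), ∑ w, if G.Adj (v i) w then (g (v i) - g w) ^ 2 else 0 := by
    rw [mul_sum, mul_sum, mul_sum, ← sum_add_distrib]
    exact sum_le_sum fun i _ => mul_sq_le G hd g (v i)
  have h2 : (∑ i ∈ range (L + 1), ∑ w, if G.Adj (v i) w then (g (v i) - g w) ^ 2 else 0)
      ≤ energy G g :=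
    sum_le_of_dist_eq G hv (F := fun u => ∑ w, if G.Adj u w then (g u - g w) ^ 2 else 0)
      fun u => sum_nonneg fun w _ => by split_ifs <;> positivity
  have h3 : (∑ i ∈ range (L + 1), ∑ w, if G.Adj (v i) w then g w ^ 2 else 0)
      ≤ 3 * ∑ u, g u ^ 2 := by
    rw [sum_comm, mul_sum]
    refine sum_le_sum fun w _ => ?_
    rw [← sum_filter, sum_const, nsmul_eq_mul]
    gcongr
    have hsub : (range (L + 1)).filter (fun i => G.Adj (v i) w)
        ⊆ Icc (G.dist x w - 1) (G.dist x w + 1) := by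
      intro i hi
      simp only [mem_filter, mem_range] at hi
      have hi' := hv i (by omega)
      have ha := hconn.dist_triangle (u := x) (v := v i) (w := w)
      have hb := hconn.dist_triangle (u := x) (v := w) (w := v i)
      rw [SimpleGraph.dist_eq_one_iff_adj.2 hi.2] at ha
      rw [SimpleGraph.dist_eq_one_iff_adj.2 hi.2.symm] at hb
      rw [mem_Icc]
      omega
    have hcard := card_le_card hsub
    rw [Nat.card_Icc] at hcard
    exact_mod_cast hcard.trans (by omega)
  linarith

/-- A discrete Gagliardo-Nirenberg inequality along a geodesic ending at a sign change. -/
lemma sq_le_of_nonneg_of_nonpos (hconn : G.Connected) {d : ℝ} (hd0 : 0 < d)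
    (hd : ∀ u, d ≤ G.degree u) (g : V → ℝ) {x z : V} (hx : 0 ≤ g x) (hz : g z ≤ 0)
    {c : ℝ} (hc : 0 < c) :
    g x ^ 2 ≤ c / 2 * energy G g
      + 2 / c * (((21 / 4) * (∑ u, g u ^ 2) + (7 / 3) * energy G g) / d) := by
  obtain ⟨v, L, h0, hL, hadj, hv⟩ := exists_geodesic G hconn x z
  have hS := mul_sum_geodesic_sq_le G hconn hd g hv
  rw [← le_div_iff₀' hd0] at hS
  have hD : ∑ i ∈ range L, (g (v i) - g (v (i + 1))) ^ 2 ≤ energy G g := by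
    calc ∑ i ∈ range L, (g (v i) - g (v (i + 1))) ^ 2
        ≤ ∑ i ∈ range L, ∑ w, if G.Adj (v i) w then (g (v i) - g w) ^ 2 else 0 := by
          refine sum_le_sum fun i hi => ?_
          have := single_le_sum
            (f := fun w => if G.Adj (v i) w then (g (v i) - g w) ^ 2 else 0)
            (fun w _ => by split_ifs <;> positivity) (mem_univ (v (i + 1)))
          simpa [hadj i (mem_range.1 hi)] using this
      _ ≤ ∑ i ∈ range (L + 1), ∑ w, if G.Adj (v i) w then (g (v i) - g w) ^ 2 else 0 :=
          sum_le_sum_of_subset_of_nonneg (range_mono (Nat.le_succ L))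
            fun i _ _ => sum_nonneg fun w _ => by split_ifs <;> positivity
      _ ≤ energy G g :=
          sum_le_of_dist_eq G hv (F := fun u => ∑ w, if G.Adj u w then (g u - g w) ^ 2 else 0)
            fun u => sum_nonneg fun w _ => by split_ifs <;> positivity
  have hA : ∑ i ∈ range L, g (v i) ^ 2 ≤ ∑ i ∈ range (L + 1), g (v i) ^ 2 := by
    rw [sum_range_succ]
    linarith [sq_nonneg (g (v L))]
  have hB : ∑ i ∈ range L, g (v (i + 1)) ^ 2 ≤ ∑ i ∈ range (L + 1), g (v i) ^ 2 := by
    rw [sum_range_succ']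
    linarith [sq_nonneg (g (v 0))]
  have key : ∀ a b : ℝ,
      max a 0 ^ 2 - max b 0 ^ 2 ≤ c / 2 * (a - b) ^ 2 + 1 / c * (a ^ 2 + b ^ 2) := by
    intro a b
    have h1 : |max a 0 - max b 0| ≤ |a - b| := abs_max_sub_max_le_abs a b 0
    have h2 : ∀ r : ℝ, max r 0 ≤ |r| := fun r => max_le (le_abs_self r) (abs_nonneg r)
    have h3 : max a 0 ^ 2 - max b 0 ^ 2 ≤ |a - b| * (|a| + |b|) := by
      calc max a 0 ^ 2 - max b 0 ^ 2 = (max a 0 - max b 0) * (max a 0 + max b 0) := by ring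
        _ ≤ |max a 0 - max b 0| * (max a 0 + max b 0) := by
            gcongr
            exact le_abs_self _
        _ ≤ |a - b| * (|a| + |b|) := by
            gcongr <;> exact h2 _
    have h4 : |a - b| * (|a| + |b|) ≤ c / 2 * |a - b| ^ 2 + 1 / c * (|a| ^ 2 + |b| ^ 2) := by
      have : c / 2 * |a - b| ^ 2 + 1 / c * (|a| ^ 2 + |b| ^ 2) - |a - b| * (|a| + |b|)
          = ((c * |a - b| - (|a| + |b|)) ^ 2 + (|a| - |b|) ^ 2) / (2 * c) := by
        field_simp
        ring
      have : 0 ≤ ((c * |a - b| - (|a| + |b|)) ^ 2 + (|a| - |b|) ^ 2) / (2 * c) := by positivity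
      linarith
    simp only [sq_abs] at h4
    exact h3.trans h4
  have htel : g x ^ 2 = ∑ i ∈ range L, (max (g (v i)) 0 ^ 2 - max (g (v (i + 1))) 0 ^ 2) := by
    rw [sum_range_sub', h0, hL, max_eq_left hx, max_eq_right hz]
    ring
  calc g x ^ 2 ≤ ∑ i ∈ range L, (c / 2 * (g (v i) - g (v (i + 1))) ^ 2
        + 1 / c * (g (v i) ^ 2 + g (v (i + 1)) ^ 2)) := by
        rw [htel]
        exact sum_le_sum fun i _ => key _ _
    _ = c / 2 * (∑ i ∈ range L, (g (v i) - g (v (i + 1))) ^ 2)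
        + 1 / c * (∑ i ∈ range L, g (v i) ^ 2 + ∑ i ∈ range L, g (v (i + 1)) ^ 2) := by
        rw [sum_add_distrib, ← mul_sum, ← mul_sum, sum_add_distrib]
    _ ≤ c / 2 * energy G g + 1 / c * (∑ i ∈ range (L + 1), g (v i) ^ 2
        + ∑ i ∈ range (L + 1), g (v i) ^ 2) := by gcongr
    _ = c / 2 * energy G g + 2 / c * ∑ i ∈ range (L + 1), g (v i) ^ 2 := by ring
    _ ≤ _ := by gcongr

end Geodesic

section SpectralGap

variable [Fintype V] (G : SimpleGraph V) [DecidableRel G.Adj]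

lemma abs_sub_le_length_mul (g : V → ℝ) {x z : V} (p : G.Walk x z) :
    |g x - g z| ≤ p.length * Real.sqrt (energy G g) := by
  induction p with
  | nil => simp
  | @cons u w z h p ih =>
    have h1 : |g u - g w| ≤ Real.sqrt (energy G g) := by
      apply Real.abs_le_sqrt
      have h2 := single_le_sum (f := fun w => if G.Adj u w then (g u - g w) ^ 2 else 0)
        (fun w _ => by split_ifs <;> positivity) (mem_univ w)
      have h3 := single_le_sum
        (f := fun u => ∑ w, if G.Adj u w then (g u - g w) ^ 2 else 0)
        (fun u _ => sum_nonneg fun w _ => by split_ifs <;> positivity) (mem_univ u)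
      simp only [h, if_true] at h2
      exact h2.trans h3
    have h4 := abs_sub_le (g u) (g w) (g z)
    rw [SimpleGraph.Walk.length_cons]
    push_cast
    linarith

lemma exists_nonpos_of_mean_zero (hdeg : ∀ u, 0 < (G.degree u : ℝ)) {g : V → ℝ}
    (hg : ∑ u, (G.degree u : ℝ) * g u = 0) (x : V) : ∃ z, g z ≤ 0 := by
  by_contra! h
  have : 0 < ∑ u, (G.degree u : ℝ) * g u :=
    sum_pos (fun u _ => mul_pos (hdeg u) (h u)) ⟨x, mem_univ x⟩
  linarith

lemma exists_sq_le_mul_energy (hconn : G.Connected) (hdeg : ∀ u, 0 < (G.degree u : ℝ)) :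
    ∃ C : ℝ, 0 < C ∧ ∀ g : V → ℝ, ∑ u, (G.degree u : ℝ) * g u = 0 →
      ∀ x, g x ^ 2 ≤ C * energy G g := by
  set D : ℝ := ∑ a, ∑ b, (G.dist a b : ℝ) with hD
  have hdist : ∀ a b, (G.dist a b : ℝ) ≤ D := fun a b =>
    (single_le_sum (f := fun b => (G.dist a b : ℝ)) (fun _ _ => by positivity)
      (mem_univ b)).trans
      (single_le_sum (f := fun a => ∑ b, (G.dist a b : ℝ)) (fun _ _ => by positivity)
        (mem_univ a))
  have hD0 : 0 ≤ D := by positivity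
  have key : ∀ g : V → ℝ, ∑ u, (G.degree u : ℝ) * g u = 0 → ∀ x,
      g x ≤ D * Real.sqrt (energy G g) := by
    intro g hg x
    obtain ⟨z, hz⟩ := exists_nonpos_of_mean_zero G hdeg hg x
    obtain ⟨p, hp⟩ := hconn.exists_walk_length_eq_dist x z
    have h1 := abs_sub_le_length_mul G g p
    rw [hp] at h1
    calc g x ≤ |g x - g z| := by linarith [le_abs_self (g x - g z)]
      _ ≤ _ := h1
      _ ≤ _ := by gcongr; exact hdist x z
  refine ⟨D ^ 2 + 1, by positivity, fun g hg x => ?_⟩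
  have h1 := key g hg x
  have h2 := key (fun u => -g u) (by simp [hg]) x
  rw [energy_neg] at h2
  have h3 : g x ^ 2 ≤ (D * Real.sqrt (energy G g)) ^ 2 := sq_le_sq' (by linarith) h1
  rw [mul_pow, Real.sq_sqrt (energy_nonneg G g)] at h3
  linarith [energy_nonneg G g]

variable [DecidableEq V]

lemma sum_lazyPi_mul (f : V → ℝ) :
    ∑ u, lazyPi G u * f u = (∑ u, (G.degree u : ℝ) * f u) / ∑ u, (G.degree u : ℝ) := by
  rw [sum_div]
  refine sum_congr rfl fun u _ => ?_
  rw [lazyPi]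
  ring

lemma pip_lazyPi (f g : V → ℝ) : pip (lazyPi G) f g
    = (∑ u, (G.degree u : ℝ) * (f u * g u)) / ∑ u, (G.degree u : ℝ) := by
  rw [← sum_lazyPi_mul]
  simp only [pip, mul_assoc]

lemma pip_sub_pip_lazyP (hdeg : ∀ u, 0 < (G.degree u : ℝ)) (g : V → ℝ) :
    pip (lazyPi G) g g - pip (lazyPi G) g ((lazyP G).mulVec g)
      = energy G g / (4 * ∑ u, (G.degree u : ℝ)) := by
  rw [pip_lazyPi, pip_lazyPi, ← sub_div, ← sum_sub_distrib, ← div_div,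
    ← sum_degree_mul_sub_lazyP G hdeg]
  congr 1
  refine sum_congr rfl fun u _ => ?_
  ring

lemma sum_degree_mul_eq_zero (hm : 0 < ∑ u, (G.degree u : ℝ)) {g : V → ℝ}
    (hg : ∑ u, lazyPi G u * g u = 0) : ∑ u, (G.degree u : ℝ) * g u = 0 := by
  rw [sum_lazyPi_mul, div_eq_zero_iff] at hg
  exact hg.resolve_right hm.ne'

lemma secondEig_lt_one (hconn : G.Connected) (hdeg : ∀ u, 0 < (G.degree u : ℝ))
    (hm : 0 < ∑ u, (G.degree u : ℝ)) : secondEig (lazyPi G) (lazyP G) < 1 := by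
  obtain ⟨C, hC, hCb⟩ := exists_sq_le_mul_energy G hconn hdeg
  set m := ∑ u, (G.degree u : ℝ) with hm_def
  have hlt : max 0 (1 - 1 / (C * (4 * m))) < 1 :=
    max_lt one_pos (by linarith [show 0 < 1 / (C * (4 * m)) by positivity])
  refine lt_of_le_of_lt (Real.sSup_le ?_ (le_max_left _ _)) hlt
  rintro r ⟨f, hf1, hf0, rfl⟩
  have h0 := sum_degree_mul_eq_zero G hm hf0
  have h1 := pip_sub_pip_lazyP G hdeg f
  have h2 : 1 ≤ C * energy G f := by
    rw [← hf1, pip_lazyPi, div_le_iff₀ hm, mul_comm, sum_mul]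
    refine sum_le_sum fun u _ => ?_
    rw [← sq]
    exact mul_le_mul_of_nonneg_left (hCb f h0 u) (hdeg u).le
  have h3 : 1 / (C * (4 * m)) ≤ energy G f / (4 * m) := by
    rw [← div_div]
    gcongr
    rwa [div_le_iff₀' hC]
  refine le_max_of_le_right ?_
  rw [hf1] at h1
  linarith

lemma trelT_nonneg (hconn : G.Connected) (hdeg : ∀ u, 0 < (G.degree u : ℝ))
    (hm : 0 < ∑ u, (G.degree u : ℝ)) : 0 ≤ trelT (lazyPi G) (lazyP G) := by
  have := secondEig_lt_one G hconn hdeg hm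
  exact div_nonneg zero_le_one (by linarith)

/-- The Poincaré inequality. -/
lemma sum_degree_mul_sq_le (hconn : G.Connected) (hdeg : ∀ u, 0 < (G.degree u : ℝ))
    (hm : 0 < ∑ u, (G.degree u : ℝ)) {g : V → ℝ} (hg : ∑ u, (G.degree u : ℝ) * g u = 0) :
    ∑ u, (G.degree u : ℝ) * g u ^ 2 ≤ trelT (lazyPi G) (lazyP G) * energy G g / 4 := by
  have hlam := secondEig_lt_one G hconn hdeg hm
  have hN := pip_lazyPi G g g
  simp only [← sq] at hN
  rw [eq_div_iff hm.ne'] at hN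
  set N := pip (lazyPi G) g g with hN_def
  have hN0 : 0 ≤ N :=
    nonneg_of_mul_nonneg_left (hN ▸ sum_nonneg fun u _ => by positivity) hm
  have key : N * (1 - secondEig (lazyPi G) (lazyP G))
      ≤ energy G g / (4 * ∑ u, (G.degree u : ℝ)) := by
    rcases hN0.eq_or_lt with h0 | hpos
    · rw [← h0, zero_mul]
      have := energy_nonneg G g
      positivity
    · set a := (Real.sqrt N)⁻¹ with ha
      have ha2 : a ^ 2 = N⁻¹ := by rw [ha, inv_pow, Real.sq_sqrt hN0]
      have hpip : pip (lazyPi G) (a • g) (a • g) = 1 := by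
        have : pip (lazyPi G) (a • g) (a • g) = a ^ 2 * N := by
          simp only [hN_def, pip, mul_sum, Pi.smul_apply, smul_eq_mul]
          exact sum_congr rfl fun u _ => by ring
        rw [this, ha2, inv_mul_cancel₀ hpos.ne']
      have hmean : ∑ u, lazyPi G u * (a • g) u = 0 := by
        rw [sum_lazyPi_mul]
        have : ∑ u, (G.degree u : ℝ) * (a • g) u = a * ∑ u, (G.degree u : ℝ) * g u := by
          rw [mul_sum]
          exact sum_congr rfl fun u _ => by simp only [Pi.smul_apply, smul_eq_mul]; ring
        rw [this, hg, mul_zero, zero_div]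
      have hle : pip (lazyPi G) (a • g) ((lazyP G).mulVec (a • g))
          ≤ secondEig (lazyPi G) (lazyP G) := by
        refine le_csSup ⟨1, ?_⟩ ⟨a • g, hpip, hmean, rfl⟩
        rintro r ⟨f, hf1, -, rfl⟩
        have h1 := pip_sub_pip_lazyP G hdeg f
        have h2 : 0 ≤ energy G f / (4 * ∑ u, (G.degree u : ℝ)) :=
          div_nonneg (energy_nonneg G f) (by positivity)
        linarith
      have h1 := pip_sub_pip_lazyP G hdeg (a • g)
      rw [hpip, energy_smul, ha2, mul_div_assoc] at h1
      rw [← le_inv_mul_iff₀ hpos]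
      linarith
  rw [← hN, trelT]
  have hgap : 0 < 1 - secondEig (lazyPi G) (lazyP G) := by linarith
  rw [le_div_iff₀ (by positivity)] at key
  rw [one_div_mul_eq_div, div_div, le_div_iff₀ (by positivity)]
  linarith

lemma four_mul_lt {s d : ℝ} (hs : 1 ≤ s) (hd : 1 ≤ d)
    (h : 5 / 2 * s < 7 / 16 * (s ^ 2 - 1) / d + 7 / 3) : 4 * d < s := by
  have hd0 : 0 < d := by linarith
  rw [← sub_lt_iff_lt_add, lt_div_iff₀ hd0] at h
  by_contra! hle
  nlinarith [mul_nonneg (sub_nonneg.2 hs) (sub_nonneg.2 hle)]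

lemma sq_le_mul_energy_of_nonneg (hconn : G.Connected) {d : ℝ} (hd1 : 1 ≤ d)
    (hd : ∀ u, d ≤ G.degree u) {g : V → ℝ} (hg : ∑ u, (G.degree u : ℝ) * g u = 0) {x : V}
    (hx : 0 ≤ g x) :
    g x ^ 2 ≤ 5 / 2 * Real.sqrt (trelT (lazyPi G) (lazyP G) + 1) / d * energy G g := by
  have hd0 : 0 < d := by linarith
  have hdeg : ∀ u, 0 < (G.degree u : ℝ) := fun u => hd0.trans_le (hd u)
  have hm : 0 < ∑ u, (G.degree u : ℝ) := sum_pos (fun u _ => hdeg u) ⟨x, mem_univ x⟩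
  have ht := trelT_nonneg G hconn hdeg hm
  have hP := sum_degree_mul_sq_le G hconn hdeg hm hg
  have hQ := energy_nonneg G g
  set t := trelT (lazyPi G) (lazyP G)
  set Q := energy G g
  set s := Real.sqrt (t + 1) with hs_def
  have hs2 : s ^ 2 = t + 1 := Real.sq_sqrt (by linarith)
  have hs1 : 1 ≤ s := Real.one_le_sqrt.2 (by linarith)
  have hs0 : 0 < s := by linarith
  have hS : ∑ u, g u ^ 2 ≤ (s ^ 2 - 1) / (4 * d) * Q := by
    have h1 : d * ∑ u, g u ^ 2 ≤ ∑ u, (G.degree u : ℝ) * g u ^ 2 := by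
      rw [mul_sum]
      gcongr with u
      exact hd u
    rw [hs2, div_mul_eq_mul_div, le_div_iff₀ (by positivity)]
    linarith
  rcases le_or_gt (7 / 16 * (s ^ 2 - 1) / d + 7 / 3) (5 / 2 * s) with hA | hB
  · have h1 := mul_sq_le_energy G hd g x
    have h2 : d * g x ^ 2 ≤ 5 / 2 * s * Q := by
      calc d * g x ^ 2 ≤ 7 / 4 * ((s ^ 2 - 1) / (4 * d) * Q) + 7 / 3 * Q := by linarith
        _ = (7 / 16 * (s ^ 2 - 1) / d + 7 / 3) * Q := by
          field_simp
          ring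
        _ ≤ _ := by gcongr
    rw [div_mul_eq_mul_div, le_div_iff₀ hd0]
    linarith
  · have hsd := four_mul_lt hs1 hd1 hB
    obtain ⟨z, hz⟩ := exists_nonpos_of_mean_zero G hdeg hg x
    have h1 := sq_le_of_nonneg_of_nonpos G hconn hd0 hd g hx hz
      (c := 5 / 2 * s / d) (by positivity)
    refine h1.trans ?_
    calc 5 / 2 * s / d / 2 * Q
          + 2 / (5 / 2 * s / d) * ((21 / 4 * ∑ u, g u ^ 2 + 7 / 3 * Q) / d)
        ≤ 5 / 2 * s / d / 2 * Q + 2 / (5 / 2 * s / d)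
          * ((21 / 4 * ((s ^ 2 - 1) / (4 * d) * Q) + 7 / 3 * Q) / d) := by gcongr
      _ = (5 / 4 * s ^ 2 + 21 / 20 * (s ^ 2 - 1) + 28 / 15 * d) / (s * d) * Q := by
        field_simp
        ring
      _ ≤ 5 / 2 * s ^ 2 / (s * d) * Q := by
        gcongr
        nlinarith
      _ = 5 / 2 * s / d * Q := by
        field_simp

lemma sq_le_mul_energy (hconn : G.Connected) {d : ℝ} (hd1 : 1 ≤ d)
    (hd : ∀ u, d ≤ G.degree u) {g : V → ℝ} (hg : ∑ u, (G.degree u : ℝ) * g u = 0) (x : V) :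
    g x ^ 2 ≤ 5 / 2 * Real.sqrt (trelT (lazyPi G) (lazyP G) + 1) / d * energy G g := by
  rcases le_total 0 (g x) with hx | hx
  · exact sq_le_mul_energy_of_nonneg G hconn hd1 hd hg hx
  · have := sq_le_mul_energy_of_nonneg G hconn hd1 hd (g := fun u => -g u) (by simp [hg])
      (x := x) (by linarith)
    rwa [neg_sq, energy_neg] at this

/-- A nonnegative function vanishing at `x` that satisfies the subsolution inequality
`h ≤ 1 + P h` elsewhere is bounded as soon as the sup norm of centred functions is controlled by
their energy. -/
lemma le_of_subsolution (hdeg : ∀ u, 0 < (G.degree u : ℝ)) {K : ℝ} (hK : 0 ≤ K)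
    (hKb : ∀ g : V → ℝ, ∑ u, (G.degree u : ℝ) * g u = 0 → ∀ x, g x ^ 2 ≤ K * energy G g)
    {h : V → ℝ} {x : V} (hx : h x = 0) (h0 : ∀ y, 0 ≤ h y)
    (hsub : ∀ y, y ≠ x → h y ≤ 1 + (lazyP G).mulVec h y) (y : V) :
    h y ≤ 8 * K * ∑ u, (G.degree u : ℝ) := by
  have hm : 0 < ∑ u, (G.degree u : ℝ) := sum_pos (fun u _ => hdeg u) ⟨x, mem_univ x⟩
  have hE : energy G h / 4 ≤ ∑ u, (G.degree u : ℝ) * h u := by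
    rw [← sum_degree_mul_sub_lazyP G hdeg]
    refine sum_le_sum fun u _ => mul_le_mul_of_nonneg_left ?_ (hdeg u).le
    by_cases hu : u = x
    · simp [hu, hx]
    · nlinarith [h0 u, hsub u hu]
  set m := ∑ u, (G.degree u : ℝ) with hm_def
  set c := (∑ u, (G.degree u : ℝ) * h u) / m with hc
  have hcm : ∑ u, (G.degree u : ℝ) * h u = c * m := by
    rw [hc, div_mul_cancel₀ _ hm.ne']
  have hc0 : 0 ≤ c := div_nonneg (sum_nonneg fun u _ => mul_nonneg (hdeg u).le (h0 u)) hm.le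
  have hmean : ∑ u, (G.degree u : ℝ) * (h u - c) = 0 := by
    simp only [mul_sub, sum_sub_distrib, ← sum_mul]
    rw [hcm, ← hm_def]
    ring
  have hb : ∀ z, (h z - c) ^ 2 ≤ 4 * K * m * c := by
    intro z
    have h1 := hKb (fun u => h u - c) hmean z
    rw [energy_sub_const] at h1
    have h2 : K * energy G h ≤ K * (4 * (c * m)) := by
      gcongr
      linarith
    linarith
  have hcK : c ≤ 4 * K * m := by
    have h1 := hb x
    rw [hx, zero_sub, neg_sq, sq] at h1
    rcases hc0.eq_or_lt with h2 | h2
    · rw [← h2]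
      positivity
    · exact le_of_mul_le_mul_right h1 h2
  have h1 : (h y - c) ^ 2 ≤ (4 * K * m) ^ 2 := by
    refine (hb y).trans ?_
    rw [sq]
    gcongr
  have := abs_le_of_sq_le_sq h1 (by positivity)
  linarith [(abs_le.1 this).2]

lemma Ehit_lazyP_le (hconn : G.Connected) {d : ℝ} (hd1 : 1 ≤ d)
    (hd : ∀ u, d ≤ G.degree u) (x y : V) :
    Ehit (lazyP G) x y ≤
      20 * Real.sqrt (trelT (lazyPi G) (lazyP G) + 1) / d * ∑ u, (G.degree u : ℝ) := by
  have hd0 : 0 < d := by linarith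
  have hP : ∀ a b, 0 ≤ lazyP G a b := lazyP_nonneg G
  refine Real.tsum_le_of_sum_range_le (fun t => survProb_nonneg hP x y t) fun T => ?_
  have := le_of_subsolution G (fun u => hd0.trans_le (hd u))
    (K := 5 / 2 * Real.sqrt (trelT (lazyPi G) (lazyP G) + 1) / d) (by positivity)
    (fun g hg x => sq_le_mul_energy G hconn hd1 hd hg x)
    (h := fun y => ∑ t ∈ range T, survProb (lazyP G) x y t) (x := x)
    (by simp [survProb_self]) (fun y => sum_nonneg fun t _ => survProb_nonneg hP x y t)
    (fun y hy => sum_range_survProb_le hP hy T) y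
  refine this.trans (le_of_eq ?_)
  ring

end SpectralGap

end LazyWalk

theorem stmt18 [Fintype V] [Nonempty V] [DecidableEq V] (G : SimpleGraph V)
    [DecidableRel G.Adj] (hconn : G.Connected) (hcard : 2 ≤ Fintype.card V) :
    thit (lazyP G) ≤ 20 * (davgR G / dminR G) * (Fintype.card V : ℝ) *
      Real.sqrt (trelT (lazyPi G) (lazyP G) + 1) := by
  have : Nontrivial V := Fintype.one_lt_card_iff_nontrivial.1 hcard
  have hd1 : 1 ≤ dminR G := Finset.le_inf' _ _ fun v _ => by
    exact_mod_cast hconn.preconnected.degree_pos_of_nontrivial v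
  have hd : ∀ u, dminR G ≤ G.degree u := fun u => Finset.inf'_le _ (mem_univ u)
  have hn : (Fintype.card V : ℝ) ≠ 0 := by positivity
  refine ciSup_le fun q => (LazyWalk.Ehit_lazyP_le G hconn hd1 hd q.1 q.2).trans (le_of_eq ?_)
  rw [davgR]
  field_simp
end

section
/- For lazy random walk on a finite connected graph, for any vertex x and t ≥ 0: P^t(x,x) − π(x) ≤ (10 d_x/d_min) · min(1/√(t+1), √(t_rel+1)/(t+1)). -/
open Finset

variable {V : Type*}

/-- The sum of `(f y - f z)²` over ordered pairs of adjacent vertices. -/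
noncomputable def edgeEnergy [Fintype V] (G : SimpleGraph V) [DecidableRel G.Adj]
    (f : V → ℝ) : ℝ :=
  ∑ y, ∑ z, if G.Adj y z then (f y - f z) ^ 2 else 0

theorem edgeEnergy_nonneg [Fintype V] (G : SimpleGraph V) [DecidableRel G.Adj] (f : V → ℝ) :
    0 ≤ edgeEnergy G f := by
  unfold edgeEnergy
  refine sum_nonneg fun y _ => sum_nonneg fun z _ => ?_
  split_ifs <;> positivity

theorem edgeEnergy_neg [Fintype V] (G : SimpleGraph V) [DecidableRel G.Adj] (f : V → ℝ) :
    edgeEnergy G (-f) = edgeEnergy G f := by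
  unfold edgeEnergy
  refine sum_congr rfl fun y _ => sum_congr rfl fun z _ => ?_
  simp only [Pi.neg_apply]
  congr 1
  ring

theorem two_mul_sum_sq_le_edgeEnergy [Fintype V] [DecidableEq V] (G : SimpleGraph V)
    [DecidableRel G.Adj] (f : V → ℝ) {ι : Type*} (I : Finset ι) (e : ι → V × V) (D : V → ℕ)
    (hinj : Set.InjOn e I) (hadj : ∀ i ∈ I, G.Adj (e i).1 (e i).2)
    (hD : ∀ i ∈ I, D (e i).2 = D (e i).1 + 1) :
    2 * ∑ i ∈ I, (f (e i).1 - f (e i).2) ^ 2 ≤ edgeEnergy G f := by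
  have hE : edgeEnergy G f =
      ∑ q : V × V, if G.Adj q.1 q.2 then (f q.1 - f q.2) ^ 2 else 0 := by
    rw [edgeEnergy, Fintype.sum_prod_type]
  have hA : ∑ q ∈ I.image e, (if G.Adj q.1 q.2 then (f q.1 - f q.2) ^ 2 else 0) =
      ∑ i ∈ I, (f (e i).1 - f (e i).2) ^ 2 := by
    rw [sum_image hinj]
    exact sum_congr rfl fun i hi => if_pos (hadj i hi)
  have hB : ∑ q ∈ (I.image e).image Prod.swap,
      (if G.Adj q.1 q.2 then (f q.1 - f q.2) ^ 2 else 0) =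
      ∑ q ∈ I.image e, (if G.Adj q.1 q.2 then (f q.1 - f q.2) ^ 2 else 0) := by
    rw [sum_image Prod.swap_injective.injOn]
    refine sum_congr rfl fun q _ => ?_
    simp only [Prod.fst_swap, Prod.snd_swap, G.adj_comm q.2 q.1]
    congr 1
    ring
  have hdisj : Disjoint (I.image e) ((I.image e).image Prod.swap) := by
    rw [disjoint_left]
    intro q hq hq'
    obtain ⟨i, hi, rfl⟩ := mem_image.1 hq
    obtain ⟨q', hq', hs⟩ := mem_image.1 hq'
    obtain ⟨j, hj, rfl⟩ := mem_image.1 hq'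
    have h1 := hD i hi
    have h2 := hD j hj
    rw [← hs] at h1
    simp only [Prod.fst_swap, Prod.snd_swap] at h1
    omega
  calc 2 * ∑ i ∈ I, (f (e i).1 - f (e i).2) ^ 2
      = ∑ q ∈ I.image e ∪ (I.image e).image Prod.swap,
          (if G.Adj q.1 q.2 then (f q.1 - f q.2) ^ 2 else 0) := by
        rw [sum_union hdisj, hB, hA, two_mul]
    _ ≤ edgeEnergy G f := by
        rw [hE]
        refine sum_le_univ_sum_of_nonneg fun q => ?_
        split_ifs <;> positivity

/-- Neighbourhoods of the vertices of a geodesic overlap at most three times. -/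
theorem sum_degree_le_three_mul_card [Fintype V] [DecidableEq V] (G : SimpleGraph V)
    [DecidableRel G.Adj] (D : V → ℕ) (hD : ∀ y z, G.Adj y z → D z ≤ D y + 1) (v : ℕ → V) (k : ℕ)
    (hv : ∀ j < k, D (v j) = j) (S : Finset V) (hS : ∀ j < k, ∀ z, G.Adj (v j) z → z ∈ S) :
    ∑ j ∈ range k, G.degree (v j) ≤ 3 * #S := by
  have h1 : ∀ j ∈ range k, G.degree (v j) = ∑ z ∈ S, if G.Adj (v j) z then 1 else 0 := by
    intro j hj
    rw [← card_filter, ← G.card_neighborFinset_eq_degree]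
    congr 1
    ext z
    simp only [SimpleGraph.mem_neighborFinset, mem_filter]
    exact ⟨fun h => ⟨hS j (mem_range.1 hj) z h, h⟩, fun h => h.2⟩
  rw [sum_congr rfl h1, sum_comm, mul_comm, ← smul_eq_mul]
  refine sum_le_card_nsmul _ _ _ fun z _ => ?_
  rw [← card_filter]
  calc #{j ∈ range k | G.Adj (v j) z} ≤ #(Icc (D z - 1) (D z + 1)) := by
        refine card_le_card fun j hj => ?_
        obtain ⟨hj, hjz⟩ := mem_filter.1 hj
        have h2 := hD _ _ hjz
        have h3 := hD _ _ hjz.symm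
        rw [hv j (mem_range.1 hj)] at h2 h3
        rw [mem_Icc]
        omega
    _ ≤ 3 := by rw [Nat.card_Icc]; omega

theorem exists_geodesic (G : SimpleGraph V) (hconn : G.Connected) (x w : V) :
    ∃ v : ℕ → V, v 0 = x ∧ v (G.dist x w) = w ∧
      (∀ j < G.dist x w, G.Adj (v j) (v (j + 1))) ∧ ∀ j ≤ G.dist x w, G.dist x (v j) = j := by
  obtain ⟨p, hp⟩ := hconn.exists_walk_length_eq_dist x w
  refine ⟨p.getVert, p.getVert_zero, hp ▸ p.getVert_length,
    fun j hj => p.adj_getVert_succ (hp ▸ hj), fun j hj => ?_⟩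
  have h1 := SimpleGraph.dist_le (p.take j)
  have h2 := SimpleGraph.dist_le (p.drop j)
  rw [p.take_length] at h1
  rw [p.drop_length] at h2
  have h3 := hconn.dist_triangle (u := x) (v := p.getVert j) (w := w)
  omega

/-- If `f` drops by half of its value at `x`, then either many neighbours of `x` see this drop, or
it is spread along a geodesic inside `{f > f x / 2}`, whose length this set controls. -/
theorem edgeEnergy_lower_bound [Fintype V] [DecidableEq V] (G : SimpleGraph V)
    [DecidableRel G.Adj] (hconn : G.Connected) {δ : ℝ} (hδ : ∀ v, δ ≤ G.degree v) (f : V → ℝ)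
    {x w : V} (hx : 0 < f x) (hw : f w ≤ f x / 2) :
    (G.degree x : ℝ) * f x ^ 2 / 4 ≤ edgeEnergy G f ∨
      f x ^ 2 * δ ≤ 12 * (#{y | f x / 2 < f y} : ℝ) * edgeEnergy G f := by
  set S : Finset V := {y | f x / 2 < f y} with hSdef
  have hmem : ∀ y, y ∈ S ↔ f x / 2 < f y := by simp [hSdef]
  have hE := edgeEnergy_nonneg G f
  have hw' : w ∈ Sᶜ := by rw [mem_compl, hmem]; exact hw.not_gt
  obtain ⟨w₀, hw₀, hmin⟩ := exists_min_image Sᶜ (G.dist x) ⟨w, hw'⟩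
  obtain ⟨v, hv0, hvr, hadj, hdist⟩ := exists_geodesic G hconn x w₀
  set r := G.dist x w₀
  have hfw₀ : f w₀ ≤ f x / 2 := by
    rw [mem_compl, hmem] at hw₀
    exact not_lt.1 hw₀
  have hin : ∀ z, G.dist x z < r → z ∈ S := by
    intro z hz
    by_contra h
    exact absurd (hmin z (mem_compl.2 h)) (not_le.2 hz)
  have hlip : ∀ y z, G.Adj y z → G.dist x z ≤ G.dist x y + 1 := fun y z h => by
    have := hconn.dist_triangle (u := x) (v := y) (w := z)
    rwa [SimpleGraph.dist_eq_one_iff_adj.2 h] at this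
  have hr0 : r ≠ 0 := by
    intro h
    rw [h, hv0] at hvr
    rw [← hvr] at hfw₀
    linarith
  have hpath : f x ^ 2 ≤ 2 * r * edgeEnergy G f := by
    have h1 := two_mul_sum_sq_le_edgeEnergy G f (range r) (fun j => (v j, v (j + 1))) (G.dist x)
      (fun i hi j hj h => by
        rw [← hdist i (mem_range.1 hi).le, ← hdist j (mem_range.1 hj).le]
        exact congrArg (G.dist x) (Prod.ext_iff.1 h).1)
      (fun j hj => hadj j (mem_range.1 hj))
      (fun j hj => by
        have := mem_range.1 hj
        simp only
        rw [hdist j this.le, hdist (j + 1) this])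
    have h2 := sq_sum_le_card_mul_sum_sq (s := range r) (f := fun j => f (v j) - f (v (j + 1)))
    rw [sum_range_sub', hv0, hvr, card_range] at h2
    have h3 : (f x / 2) ^ 2 ≤ (f x - f w₀) ^ 2 := by gcongr; linarith
    have h4 := mul_le_mul_of_nonneg_left h1 (Nat.cast_nonneg (α := ℝ) r)
    simp only at h4
    linarith
  suffices h : (G.degree x : ℝ) * f x ^ 2 / 4 ≤ edgeEnergy G f ∨ r * δ ≤ 6 * (#S : ℝ) by
    refine h.imp_right fun h => ?_
    have hr' : (0 : ℝ) < r := by positivity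
    rcases le_or_gt δ 0 with h0 | h0
    · exact (mul_nonpos_of_nonneg_of_nonpos (sq_nonneg _) h0).trans (by positivity)
    · calc f x ^ 2 * δ ≤ 2 * r * edgeEnergy G f * δ := by gcongr
        _ = 2 * (r * δ) * edgeEnergy G f := by ring
        _ ≤ 2 * (6 * (#S : ℝ)) * edgeEnergy G f := by gcongr
        _ = _ := by ring
  rcases Nat.lt_or_ge r 2 with hr2 | hr2
  · have hr1 : r = 1 := by omega
    have hsplit : #{z ∈ G.neighborFinset x | z ∈ S} + #{z ∈ G.neighborFinset x | z ∉ S} =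
        G.degree x := by
      rw [card_filter_add_card_filter_not, G.card_neighborFinset_eq_degree]
    rcases le_or_gt (G.degree x) (2 * #{z ∈ G.neighborFinset x | z ∉ S}) with h | h
    · left
      have h1 := two_mul_sum_sq_le_edgeEnergy G f {z ∈ G.neighborFinset x | z ∉ S}
        (fun z => (x, z)) (G.dist x) (fun i _ j _ h => (Prod.ext_iff.1 h).2)
        (fun z hz => (G.mem_neighborFinset x z).1 (mem_filter.1 hz).1)
        (fun z hz => by
          simp only [SimpleGraph.dist_self, zero_add]
          exact SimpleGraph.dist_eq_one_iff_adj.2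
            ((G.mem_neighborFinset x z).1 (mem_filter.1 hz).1))
      have h2 : (#{z ∈ G.neighborFinset x | z ∉ S} : ℝ) * (f x / 2) ^ 2 ≤
          ∑ z ∈ G.neighborFinset x with z ∉ S, (f x - f z) ^ 2 := by
        rw [← nsmul_eq_mul]
        refine card_nsmul_le_sum _ _ _ fun z hz => ?_
        have := (mem_filter.1 hz).2
        rw [hmem, not_lt] at this
        gcongr
        linarith
      have h3 : (G.degree x : ℝ) ≤ 2 * #{z ∈ G.neighborFinset x | z ∉ S} := by exact_mod_cast h
      have h4 := mul_le_mul_of_nonneg_right h3 (sq_nonneg (f x / 2))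
      simp only at h1
      linarith
    · right
      have h1 : #{z ∈ G.neighborFinset x | z ∈ S} ≤ #S :=
        card_le_card fun z hz => (mem_filter.1 hz).2
      have h2 : G.degree x ≤ 2 * #S := by omega
      have h3 : (G.degree x : ℝ) ≤ 2 * #S := by exact_mod_cast h2
      have := hδ x
      rw [hr1, Nat.cast_one]
      linarith [Nat.cast_nonneg (α := ℝ) #S]
  · right
    have h1 := sum_degree_le_three_mul_card G (G.dist x) hlip v (r - 1)
      (fun j hj => hdist j (by omega)) S (fun j hj z hz => hin z (by
        have := hlip _ _ hz
        rw [hdist j (by omega)] at this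
        omega))
    have h2 : ((r - 1 : ℕ) : ℝ) * δ ≤ ∑ j ∈ range (r - 1), (G.degree (v j) : ℝ) := by
      have := card_nsmul_le_sum (range (r - 1)) (fun j => (G.degree (v j) : ℝ)) δ
        fun j _ => hδ (v j)
      rwa [card_range, nsmul_eq_mul] at this
    have h3 : (∑ j ∈ range (r - 1), (G.degree (v j) : ℝ)) ≤ 3 * #S := by exact_mod_cast h1
    rcases le_or_gt δ 0 with h0 | h0
    · exact (mul_nonpos_of_nonneg_of_nonpos (Nat.cast_nonneg _) h0).trans (by positivity)
    · have h4 : (r : ℝ) ≤ 2 * ((r - 1 : ℕ) : ℝ) := by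
        have : r ≤ 2 * (r - 1) := by omega
        exact_mod_cast this
      have := mul_le_mul_of_nonneg_right h4 h0.le
      linarith

theorem pip_smul_right [Fintype V] (p f g : V → ℝ) (a : ℝ) : pip p f (a • g) = a * pip p f g := by
  simp only [pip, Pi.smul_apply, smul_eq_mul, mul_sum]
  exact sum_congr rfl fun _ _ => by ring

theorem pip_comm [Fintype V] (p f g : V → ℝ) : pip p f g = pip p g f :=
  sum_congr rfl fun _ _ => by ring

theorem pip_one_left [Fintype V] (p f : V → ℝ) : pip p (fun _ => 1) f = ∑ y, p y * f y :=
  sum_congr rfl fun _ _ => by ring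

theorem pip_sub_sub [Fintype V] (p f g h k : V → ℝ) :
    pip p (f - g) (h - k) = pip p f h - pip p f k - pip p g h + pip p g k := by
  simp only [pip, Pi.sub_apply, ← sum_sub_distrib, ← sum_add_distrib]
  exact sum_congr rfl fun _ _ => by ring

theorem sum_degree_mul_sq [Fintype V] (G : SimpleGraph V) [DecidableRel G.Adj]
    (f : V → ℝ) :
    ∑ y, ∑ z, (if G.Adj y z then f y ^ 2 else 0) = ∑ y, (G.degree y : ℝ) * f y * f y := by
  refine sum_congr rfl fun y _ => ?_
  rw [← sum_filter, sum_const, nsmul_eq_mul, ← G.neighborFinset_eq_filter,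
    G.card_neighborFinset_eq_degree]
  ring

theorem sum_degree_mul_sq' [Fintype V] (G : SimpleGraph V) [DecidableRel G.Adj]
    (f : V → ℝ) :
    ∑ y, ∑ z, (if G.Adj y z then f z ^ 2 else 0) = ∑ y, (G.degree y : ℝ) * f y * f y := by
  rw [sum_comm, ← sum_degree_mul_sq]
  exact sum_congr rfl fun y _ => sum_congr rfl fun z _ => by simp only [G.adj_comm z y]

section LazyWalk

variable [Fintype V] [DecidableEq V] (G : SimpleGraph V) [DecidableRel G.Adj]

theorem lazyP_mulVec_apply (f : V → ℝ) (y : V) :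
    (lazyP G).mulVec f y =
      f y / 2 + (∑ z, if G.Adj y z then f z else 0) / (2 * (G.degree y : ℝ)) := by
  have h : ∀ z, lazyP G y z * f z = (if y = z then f z / 2 else 0) +
      (if G.Adj y z then f z else 0) / (2 * (G.degree y : ℝ)) := by
    intro z
    simp only [lazyP, Matrix.of_apply]
    by_cases hyz : y = z
    · subst hyz
      simp
      ring
    · by_cases ha : G.Adj y z <;> simp [hyz, ha]
      ring
  simp only [Matrix.mulVec, dotProduct, h, sum_add_distrib, ← sum_div, sum_ite_eq, mem_univ,
    if_true]

theorem lazyPi_nonneg (y : V) : 0 ≤ lazyPi G y := by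
  unfold lazyPi
  positivity

theorem pip_lazyPi_self_nonneg (f : V → ℝ) : 0 ≤ pip (lazyPi G) f f :=
  sum_nonneg fun y _ => by
    rw [mul_assoc]
    exact mul_nonneg (lazyPi_nonneg G y) (mul_self_nonneg _)

variable {G}



theorem lazyPi_pos (hd : ∀ v, 0 < G.degree v) (y : V) : 0 < lazyPi G y := by
  have : 0 < ∑ v, (G.degree v : ℝ) :=
    sum_pos (fun v _ => Nat.cast_pos.2 (hd v)) ⟨y, mem_univ y⟩
  have := hd y
  unfold lazyPi
  positivity

theorem pip_lazyP (hd : ∀ v, 0 < G.degree v) (f h : V → ℝ) :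
    pip (lazyPi G) f ((lazyP G).mulVec h) =
      ((∑ y, (G.degree y : ℝ) * f y * h y) + ∑ y, ∑ z, if G.Adj y z then f y * h z else 0) /
        (2 * ∑ v, (G.degree v : ℝ)) := by
  rw [pip, ← sum_add_distrib, sum_div]
  refine sum_congr rfl fun y _ => ?_
  have h0 : (G.degree y : ℝ) ≠ 0 := Nat.cast_ne_zero.2 (hd y).ne'
  have h1 : (∑ z, if G.Adj y z then f y * h z else 0) =
      f y * ∑ z, if G.Adj y z then h z else 0 := by
    rw [mul_sum]
    exact sum_congr rfl fun z _ => by split_ifs <;> simp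
  rw [lazyP_mulVec_apply, h1, lazyPi]
  rcases eq_or_ne (∑ v, (G.degree v : ℝ)) 0 with hW | hW
  · simp [hW]
  · field_simp

theorem pip_lazyP_comm (hd : ∀ v, 0 < G.degree v) (f h : V → ℝ) :
    pip (lazyPi G) f ((lazyP G).mulVec h) = pip (lazyPi G) ((lazyP G).mulVec f) h := by
  rw [pip_comm _ _ h, pip_lazyP hd, pip_lazyP hd,
    sum_comm (f := fun y z => if G.Adj y z then f y * h z else 0)]
  congr 2
  · exact sum_congr rfl fun y _ => by ring
  · exact sum_congr rfl fun y _ => sum_congr rfl fun z _ => by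
      simp only [G.adj_comm z y, mul_comm (f z)]

theorem pip_lazyP_pow_comm (hd : ∀ v, 0 < G.degree v) (s : ℕ) (f h : V → ℝ) :
    pip (lazyPi G) f ((lazyP G ^ s).mulVec h) = pip (lazyPi G) ((lazyP G ^ s).mulVec f) h := by
  induction s generalizing f with
  | zero => simp
  | succ s ih =>
    rw [pow_succ', ← Matrix.mulVec_mulVec, pip_lazyP_comm hd, ih, Matrix.mulVec_mulVec,
      ← pow_succ, ← pow_succ']

theorem pip_self_eq (f : V → ℝ) :
    pip (lazyPi G) f f = (∑ y, (G.degree y : ℝ) * f y * f y) / ∑ v, (G.degree v : ℝ) := by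
  rw [pip, sum_div]
  exact sum_congr rfl fun y _ => by rw [lazyPi]; ring

theorem pip_self_sub_pip_lazyP (hd : ∀ v, 0 < G.degree v) (f : V → ℝ) :
    pip (lazyPi G) f f - pip (lazyPi G) f ((lazyP G).mulVec f) =
      edgeEnergy G f / (4 * ∑ v, (G.degree v : ℝ)) := by
  have h : edgeEnergy G f = 2 * (∑ y, (G.degree y : ℝ) * f y * f y) -
      2 * ∑ y, ∑ z, if G.Adj y z then f y * f z else 0 := by
    rw [two_mul]
    nth_rw 1 [← sum_degree_mul_sq]
    rw [← sum_degree_mul_sq', edgeEnergy]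
    simp only [mul_sum, ← sum_add_distrib, ← sum_sub_distrib]
    exact sum_congr rfl fun y _ => sum_congr rfl fun z _ => by split_ifs <;> ring
  rw [pip_lazyP hd, pip_self_eq, h]
  rcases eq_or_ne (∑ v, (G.degree v : ℝ)) 0 with hW | hW
  · simp [hW]
  · field_simp
    ring

theorem pip_lazyP_self_nonneg (hd : ∀ v, 0 < G.degree v) (f : V → ℝ) :
    0 ≤ pip (lazyPi G) f ((lazyP G).mulVec f) := by
  have h : (∑ y, ∑ z, if G.Adj y z then (f y + f z) ^ 2 else 0) =
      2 * ((∑ y, (G.degree y : ℝ) * f y * f y) +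
        ∑ y, ∑ z, if G.Adj y z then f y * f z else 0) := by
    rw [mul_add, two_mul]
    nth_rw 1 [← sum_degree_mul_sq]
    rw [← sum_degree_mul_sq']
    simp only [mul_sum, ← sum_add_distrib]
    exact sum_congr rfl fun y _ => sum_congr rfl fun z _ => by split_ifs <;> ring
  have h0 : 0 ≤ ∑ y, ∑ z, if G.Adj y z then (f y + f z) ^ 2 else 0 :=
    sum_nonneg fun y _ => sum_nonneg fun z _ => by split_ifs <;> positivity
  rw [h] at h0
  rw [pip_lazyP hd]
  exact div_nonneg (by linarith) (by positivity)

theorem lazyP_mulVec_const (hd : ∀ v, 0 < G.degree v) (a : ℝ) :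
    (lazyP G).mulVec (fun _ => a) = fun _ => a := by
  ext y
  have h0 : (G.degree y : ℝ) ≠ 0 := Nat.cast_ne_zero.2 (hd y).ne'
  rw [lazyP_mulVec_apply, ← sum_filter, sum_const, nsmul_eq_mul, ← G.neighborFinset_eq_filter,
    G.card_neighborFinset_eq_degree]
  field_simp
  ring

theorem lazyP_pow_mulVec_const (hd : ∀ v, 0 < G.degree v) (a : ℝ) (s : ℕ) :
    (lazyP G ^ s).mulVec (fun _ => a) = fun _ => a := by
  induction s with
  | zero => simp
  | succ s ih => rw [pow_succ, ← Matrix.mulVec_mulVec, lazyP_mulVec_const hd, ih]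

theorem sum_lazyPi_mul_lazyP_pow (hd : ∀ v, 0 < G.degree v) (f : V → ℝ) (s : ℕ) :
    ∑ y, lazyPi G y * (lazyP G ^ s).mulVec f y = ∑ y, lazyPi G y * f y := by
  rw [← pip_one_left, ← pip_one_left, pip_lazyP_pow_comm hd, lazyP_pow_mulVec_const hd]

theorem lazyP_pow_nonneg (s : ℕ) (y z : V) : 0 ≤ (lazyP G ^ s) y z := by
  induction s generalizing y with
  | zero =>
    rw [pow_zero, Matrix.one_apply]
    split_ifs <;> norm_num
  | succ s ih =>
    rw [pow_succ', Matrix.mul_apply]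
    refine sum_nonneg fun u _ => mul_nonneg ?_ (ih u)
    simp only [lazyP, Matrix.of_apply]
    split_ifs <;> positivity

theorem sum_lazyPi [Nonempty V] (hd : ∀ v, 0 < G.degree v) : ∑ y, lazyPi G y = 1 := by
  have : 0 < ∑ v, (G.degree v : ℝ) := sum_pos (fun v _ => Nat.cast_pos.2 (hd v)) univ_nonempty
  simp only [lazyPi, ← sum_div]
  exact div_self this.ne'

theorem pip_lazyP_self_le (hd : ∀ v, 0 < G.degree v) (f : V → ℝ) :
    pip (lazyPi G) f ((lazyP G).mulVec f) ≤ pip (lazyPi G) f f := by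
  rw [← sub_nonneg, pip_self_sub_pip_lazyP hd]
  exact div_nonneg (edgeEnergy_nonneg G f) (by positivity)

theorem pip_lazyP_le_secondEig_mul (hd : ∀ v, 0 < G.degree v) (f : V → ℝ)
    (hf : ∑ y, lazyPi G y * f y = 0) :
    pip (lazyPi G) f ((lazyP G).mulVec f) ≤
      secondEig (lazyPi G) (lazyP G) * pip (lazyPi G) f f := by
  rcases (pip_lazyPi_self_nonneg G f).eq_or_lt with h0 | h0
  · rw [← h0, mul_zero, h0]
    exact pip_lazyP_self_le hd f
  · have hscale : ∀ a : ℝ, ∀ g : V → ℝ, pip (lazyPi G) (a • f) (a • g) =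
        a ^ 2 * pip (lazyPi G) f g := fun a g => by
      rw [pip_smul_right, pip_comm, pip_smul_right, pip_comm]
      ring
    set N := pip (lazyPi G) f f
    have hsq : (√N)⁻¹ ^ 2 = N⁻¹ := by rw [inv_pow, Real.sq_sqrt h0.le]
    have hle : N⁻¹ * pip (lazyPi G) f ((lazyP G).mulVec f) ≤
        secondEig (lazyPi G) (lazyP G) := by
      refine le_csSup ⟨1, ?_⟩ ⟨(√N)⁻¹ • f, ?_, ?_, ?_⟩
      · rintro r ⟨g, hg, -, rfl⟩
        exact hg ▸ pip_lazyP_self_le hd g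
      · rw [hscale, hsq, inv_mul_cancel₀ h0.ne']
      · rw [← pip_one_left, pip_smul_right, pip_one_left, hf, mul_zero]
      · rw [Matrix.mulVec_smul, hscale, hsq]
    rwa [inv_mul_le_iff₀ h0, mul_comm] at hle

theorem exists_one_le_sq_of_pip_self_eq_one [Nonempty V] (hd : ∀ v, 0 < G.degree v) (f : V → ℝ)
    (hf : pip (lazyPi G) f f = 1) : ∃ x, 1 ≤ f x ^ 2 := by
  by_contra! h
  have : pip (lazyPi G) f f < ∑ y, lazyPi G y :=
    sum_lt_sum_of_nonempty univ_nonempty fun y _ => by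
      rw [mul_assoc, ← sq]
      exact mul_lt_of_lt_one_right (lazyPi_pos hd y) (h y)
  rw [hf, sum_lazyPi hd] at this
  exact this.false

theorem exists_nonpos_of_sum_lazyPi_mul_eq_zero [Nonempty V] (hd : ∀ v, 0 < G.degree v)
    (f : V → ℝ) (hf : ∑ y, lazyPi G y * f y = 0) : ∃ w, f w ≤ 0 := by
  by_contra! h
  exact (sum_pos (fun y _ => mul_pos (lazyPi_pos hd y) (h y)) univ_nonempty).ne' hf

theorem edgeEnergy_ge_of_pip_self_eq_one [Nonempty V] (hconn : G.Connected)
    (hd : ∀ v, 0 < G.degree v) (f : V → ℝ) (hf : pip (lazyPi G) f f = 1)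
    (h0 : ∑ y, lazyPi G y * f y = 0) : 1 / (12 * (Fintype.card V : ℝ)) ≤ edgeEnergy G f := by
  obtain ⟨x, hx⟩ := exists_one_le_sq_of_pip_self_eq_one hd f hf
  wlog hpos : 0 < f x generalizing f
  · have hne : f x ≠ 0 := fun h => by norm_num [h] at hx
    rw [← edgeEnergy_neg]
    refine this (-f) ?_ ?_ ?_ ?_
    · rw [← hf]
      exact sum_congr rfl fun y _ => by simp
    · simpa using h0
    · simpa using hx
    · simpa using lt_of_le_of_ne (not_lt.1 hpos) hne
  obtain ⟨w, hw⟩ := exists_nonpos_of_sum_lazyPi_mul_eq_zero hd f h0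
  have hn : (1 : ℝ) ≤ Fintype.card V := by exact_mod_cast Fintype.card_pos
  have hdeg : ∀ v, (1 : ℝ) ≤ G.degree v := fun v => by exact_mod_cast hd v
  rcases edgeEnergy_lower_bound G hconn hdeg f hpos (hw.trans (by positivity : 0 ≤ f x / 2))
    with h | h
  · have h1 : 1 ≤ (G.degree x : ℝ) * f x ^ 2 := one_le_mul_of_one_le_of_one_le (hdeg x) hx
    have h2 : 1 / (12 * (Fintype.card V : ℝ)) ≤ 1 / 4 := by
      apply one_div_le_one_div_of_le <;> linarith
    linarith
  · have h1 : (#{y | f x / 2 < f y} : ℝ) ≤ Fintype.card V := by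
      exact_mod_cast card_le_univ _
    have h2 := mul_le_mul_of_nonneg_right h1 (edgeEnergy_nonneg G f)
    rw [div_le_iff₀ (by positivity)]
    linarith

theorem secondEig_lazyP_lt_one [Nonempty V] (hconn : G.Connected) (hd : ∀ v, 0 < G.degree v) :
    secondEig (lazyPi G) (lazyP G) < 1 := by
  set W := ∑ v, (G.degree v : ℝ) with hWdef
  have hW : 1 ≤ W := by
    obtain ⟨v⟩ := ‹Nonempty V›
    calc (1 : ℝ) ≤ G.degree v := by exact_mod_cast hd v
      _ ≤ W := single_le_sum (f := fun v => (G.degree v : ℝ)) (fun _ _ => by positivity)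
          (mem_univ v)
  have hn : (1 : ℝ) ≤ Fintype.card V := by exact_mod_cast Fintype.card_pos
  set ε : ℝ := 1 / (12 * (Fintype.card V : ℝ)) / (4 * W) with hε
  have hεpos : 0 < ε := by positivity
  have hεle : ε ≤ 1 := by
    rw [hε, div_div]
    apply div_le_one_of_le₀ _ (by positivity)
    nlinarith
  refine lt_of_le_of_lt (Real.sSup_le ?_ (sub_nonneg.2 hεle)) (sub_lt_self 1 hεpos)
  rintro r ⟨f, hf, h0, rfl⟩
  have h1 := pip_self_sub_pip_lazyP hd f
  rw [hf] at h1
  have h2 : ε ≤ edgeEnergy G f / (4 * W) := by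
    rw [hε]
    gcongr
    exact edgeEnergy_ge_of_pip_self_eq_one hconn hd f hf h0
  linarith

/-- The function `y ↦ Pˢ(y, x) - π(x)`. -/
noncomputable def returnFun (G : SimpleGraph V) [DecidableRel G.Adj] (x : V) (s : ℕ) : V → ℝ :=
  fun y => (lazyP G ^ s) y x - lazyPi G x

theorem returnFun_eq_mulVec (hd : ∀ v, 0 < G.degree v) (x : V) (s : ℕ) :
    returnFun G x s = (lazyP G ^ s).mulVec (returnFun G x 0) := by
  have h : returnFun G x 0 = Pi.single x 1 - fun _ => lazyPi G x := by
    ext y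
    simp [returnFun, Matrix.one_apply, Pi.single_apply]
  rw [h, Matrix.mulVec_sub, lazyP_pow_mulVec_const hd, Matrix.mulVec_single_one]
  rfl

theorem lazyP_pow_mulVec_returnFun (hd : ∀ v, 0 < G.degree v) (x : V) (s j : ℕ) :
    (lazyP G ^ j).mulVec (returnFun G x s) = returnFun G x (j + s) := by
  rw [returnFun_eq_mulVec hd x s, returnFun_eq_mulVec hd x (j + s), Matrix.mulVec_mulVec, pow_add]

theorem sum_lazyPi_mul_returnFun [Nonempty V] (hd : ∀ v, 0 < G.degree v) (x : V) (s : ℕ) :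
    ∑ y, lazyPi G y * returnFun G x s y = 0 := by
  rw [returnFun_eq_mulVec hd, sum_lazyPi_mul_lazyP_pow hd]
  simp [returnFun, Matrix.one_apply, mul_sub, sum_sub_distrib, ← sum_mul, sum_lazyPi hd]

theorem pip_returnFun [Nonempty V] (hd : ∀ v, 0 < G.degree v) (x : V) (s j : ℕ) :
    pip (lazyPi G) (returnFun G x s) (returnFun G x j) =
      lazyPi G x * returnFun G x (s + j) x := by
  rw [returnFun_eq_mulVec hd x s, ← pip_lazyP_pow_comm hd, lazyP_pow_mulVec_returnFun hd]
  have h : ∀ y, lazyPi G y * returnFun G x 0 y * returnFun G x (s + j) y =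
      (if y = x then lazyPi G y * returnFun G x (s + j) y else 0) -
        lazyPi G x * (lazyPi G y * returnFun G x (s + j) y) := by
    intro y
    rw [returnFun, pow_zero, Matrix.one_apply]
    split_ifs <;> ring
  simp only [pip, h, sum_sub_distrib, ← mul_sum, sum_lazyPi_mul_returnFun hd, sum_ite_eq',
    mem_univ, if_true]
  ring

theorem returnFun_sub_succ_even [Nonempty V] (hd : ∀ v, 0 < G.degree v) (x : V) (s : ℕ) :
    returnFun G x (s + s) x - returnFun G x (s + s + 1) x =
      edgeEnergy G (returnFun G x s) / (4 * G.degree x) := by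
  have h := pip_self_sub_pip_lazyP hd (returnFun G x s)
  have h1 := lazyP_pow_mulVec_returnFun hd x s 1
  rw [pow_one] at h1
  rw [h1, pip_returnFun hd, pip_returnFun hd, ← mul_sub, add_comm 1 s, ← add_assoc] at h
  have hx : (0 : ℝ) < G.degree x := Nat.cast_pos.2 (hd x)
  have hW : 0 < ∑ v, (G.degree v : ℝ) := sum_pos (fun v _ => Nat.cast_pos.2 (hd v)) univ_nonempty
  rw [lazyPi] at h
  field_simp at h ⊢
  linarith

theorem returnFun_sub_succ_antitone_odd [Nonempty V] (hd : ∀ v, 0 < G.degree v) (x : V) (s : ℕ) :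
    returnFun G x (s + s + 2) x - returnFun G x (s + s + 3) x ≤
      returnFun G x (s + s + 1) x - returnFun G x (s + s + 2) x := by
  have h := pip_lazyP_self_nonneg hd (returnFun G x s - returnFun G x (s + 1))
  have h1 := fun k => lazyP_pow_mulVec_returnFun hd x k 1
  simp only [pow_one] at h1
  rw [Matrix.mulVec_sub, h1, h1, pip_sub_sub] at h
  simp only [pip_returnFun hd, ← mul_sub, ← mul_add] at h
  have h2 := nonneg_of_mul_nonneg_right h (lazyPi_pos hd x)
  rw [show s + (1 + s) = s + s + 1 by ring, show s + (1 + (s + 1)) = s + s + 2 by ring,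
    show s + 1 + (1 + s) = s + s + 2 by ring, show s + 1 + (1 + (s + 1)) = s + s + 3 by ring] at h2
  linarith

theorem returnFun_self_antitone [Nonempty V] (hd : ∀ v, 0 < G.degree v) (x : V) :
    Antitone fun k => returnFun G x k x := by
  have heven : ∀ s, 0 ≤ returnFun G x (s + s) x - returnFun G x (s + s + 1) x := fun s => by
    rw [returnFun_sub_succ_even hd]
    exact div_nonneg (edgeEnergy_nonneg G _) (by positivity)
  refine antitone_nat_of_succ_le fun k => ?_
  rcases Nat.even_or_odd' k with ⟨s, rfl | rfl⟩
  · have := heven s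
    rw [← two_mul] at this
    linarith
  · have h1 := heven (s + 1)
    have h2 := returnFun_sub_succ_antitone_odd hd x s
    rw [show s + 1 + (s + 1) = s + s + 2 by ring] at h1
    rw [two_mul]
    linarith

theorem returnFun_self_le_one [Nonempty V] (hd : ∀ v, 0 < G.degree v) (x : V) (s : ℕ) :
    returnFun G x s x ≤ 1 := by
  refine (returnFun_self_antitone hd x (Nat.zero_le s)).trans ?_
  simp [returnFun, lazyPi_nonneg]

theorem card_mul_le_of_returnFun [Nonempty V] (hd : ∀ v, 0 < G.degree v) {δ : ℝ}
    (hδ : ∀ v, δ ≤ G.degree v) (x : V) (s : ℕ) (hpos : 0 < returnFun G x s x) :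
    (#{y | returnFun G x s x / 2 < returnFun G x s y} : ℝ) * δ * returnFun G x s x ≤
      2 * G.degree x := by
  set f := returnFun G x s
  set S : Finset V := {y | f x / 2 < f y}
  set W := ∑ v, (G.degree v : ℝ) with hWdef
  have hW : 0 < W := sum_pos (fun v _ => Nat.cast_pos.2 (hd v)) univ_nonempty
  have h1 : (#S : ℝ) * δ ≤ ∑ y ∈ S, (G.degree y : ℝ) := by
    rw [← nsmul_eq_mul]
    exact card_nsmul_le_sum _ _ _ fun y _ => hδ y
  have h2 : ∑ y ∈ S, lazyPi G y * (f x / 2) ≤ lazyPi G x := by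
    calc ∑ y ∈ S, lazyPi G y * (f x / 2) ≤ ∑ y ∈ S, lazyPi G y * (lazyP G ^ s) y x := by
          refine sum_le_sum fun y hy => mul_le_mul_of_nonneg_left ?_ (lazyPi_nonneg G y)
          have h3 : f x / 2 < f y := (mem_filter.1 hy).2
          have h4 : f y = (lazyP G ^ s) y x - lazyPi G x := rfl
          linarith [lazyPi_nonneg G x]
      _ ≤ ∑ y, lazyPi G y * (lazyP G ^ s) y x :=
          sum_le_univ_sum_of_nonneg fun y =>
            mul_nonneg (lazyPi_nonneg G y) (lazyP_pow_nonneg s y x)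
      _ = lazyPi G x := by
          have h5 := sum_lazyPi_mul_returnFun hd x s
          simp only [returnFun, mul_sub, sum_sub_distrib, ← sum_mul, sum_lazyPi hd] at h5
          linarith
  simp only [lazyPi, ← sum_mul, ← sum_div, ← hWdef] at h2
  rw [div_mul_eq_mul_div, div_le_div_iff_of_pos_right hW] at h2
  have := mul_le_mul_of_nonneg_right h1 hpos.le
  linarith

theorem returnFun_cubic_decay_even [Nonempty V] (hconn : G.Connected) (hd : ∀ v, 0 < G.degree v)
    {δ : ℝ} (hδ0 : 0 < δ) (hδ : ∀ v, δ ≤ G.degree v) (x : V) (s : ℕ)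
    (hpos : 0 < returnFun G x s x) :
    δ ^ 2 / (96 * (G.degree x : ℝ) ^ 2) * returnFun G x s x ^ 3 ≤
      returnFun G x (s + s) x - returnFun G x (s + s + 1) x := by
  rw [returnFun_sub_succ_even hd]
  have hx : (0 : ℝ) < G.degree x := Nat.cast_pos.2 (hd x)
  have hcard := card_mul_le_of_returnFun hd hδ x s hpos
  have hle := returnFun_self_le_one hd x s
  have hE := edgeEnergy_nonneg G (returnFun G x s)
  obtain ⟨w, hw⟩ := exists_nonpos_of_sum_lazyPi_mul_eq_zero hd _
    (sum_lazyPi_mul_returnFun hd x s)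
  have h := edgeEnergy_lower_bound G hconn hδ (returnFun G x s) hpos (hw.trans (by positivity))
  set M := returnFun G x s x
  set E := edgeEnergy G (returnFun G x s)
  suffices h : M ^ 3 * δ ^ 2 ≤ 24 * G.degree x * E by
    rw [div_mul_eq_mul_div, div_le_div_iff₀ (by positivity) (by positivity)]
    nlinarith
  rcases h with h | h
  · calc M ^ 3 * δ ^ 2 ≤ (M ^ 2 * 1) * (G.degree x : ℝ) ^ 2 := by
          rw [pow_succ]
          gcongr
          exact hδ x
      _ = 4 * G.degree x * ((G.degree x : ℝ) * M ^ 2 / 4) := by ring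
      _ ≤ 4 * G.degree x * E := by gcongr
      _ ≤ 24 * G.degree x * E := by gcongr; norm_num
  · calc M ^ 3 * δ ^ 2 = M * δ * (M ^ 2 * δ) := by ring
      _ ≤ M * δ * (12 * (#{y | M / 2 < returnFun G x s y} : ℝ) * E) := by gcongr
      _ = 12 * ((#{y | M / 2 < returnFun G x s y} : ℝ) * δ * M) * E := by ring
      _ ≤ 12 * (2 * G.degree x) * E := by gcongr
      _ = 24 * G.degree x * E := by ring

theorem returnFun_gap_decay_even [Nonempty V] (hd : ∀ v, 0 < G.degree v) (x : V) (s : ℕ) :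
    (1 - secondEig (lazyPi G) (lazyP G)) * returnFun G x (s + s) x ≤
      returnFun G x (s + s) x - returnFun G x (s + s + 1) x := by
  have h := pip_lazyP_le_secondEig_mul hd _ (sum_lazyPi_mul_returnFun hd x s)
  have h1 := lazyP_pow_mulVec_returnFun hd x s 1
  rw [pow_one] at h1
  rw [h1, pip_returnFun hd, pip_returnFun hd, mul_left_comm, add_comm 1 s, ← add_assoc] at h
  have := le_of_mul_le_mul_left h (lazyPi_pos hd x)
  linarith

theorem returnFun_cubic_decay [Nonempty V] (hconn : G.Connected) (hd : ∀ v, 0 < G.degree v)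
    {δ : ℝ} (hδ0 : 0 < δ) (hδ : ∀ v, δ ≤ G.degree v) (x : V) (k : ℕ)
    (hpos : 0 < returnFun G x k x) :
    δ ^ 2 / (96 * (G.degree x : ℝ) ^ 2) * returnFun G x k x ^ 3 ≤
      returnFun G x k x - returnFun G x (k + 1) x := by
  have hmono : ∀ j ≤ k, δ ^ 2 / (96 * (G.degree x : ℝ) ^ 2) * returnFun G x k x ^ 3 ≤
      returnFun G x (j + j) x - returnFun G x (j + j + 1) x := fun j hj => by
    have h := returnFun_self_antitone hd x hj
    refine le_trans ?_ (returnFun_cubic_decay_even hconn hd hδ0 hδ x j (hpos.trans_le h))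
    simp only at h
    gcongr
  rcases Nat.even_or_odd' k with ⟨s, rfl | rfl⟩
  · have := hmono s (by omega)
    rwa [← two_mul s] at this
  · have h1 := hmono (s + 1) (by omega)
    have h2 := returnFun_sub_succ_antitone_odd hd x s
    rw [show s + 1 + (s + 1) = s + s + 2 by ring] at h1
    rw [two_mul] at h1 ⊢
    exact h1.trans h2

theorem returnFun_gap_decay [Nonempty V] (hconn : G.Connected) (hd : ∀ v, 0 < G.degree v)
    (x : V) (k : ℕ) (hpos : 0 < returnFun G x k x) :
    returnFun G x k x / (trelT (lazyPi G) (lazyP G) + 1) ≤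
      returnFun G x k x - returnFun G x (k + 1) x := by
  have hl := sub_pos.2 (secondEig_lazyP_lt_one hconn hd)
  have hT : trelT (lazyPi G) (lazyP G) + 1 =
      (1 + (1 - secondEig (lazyPi G) (lazyP G))) / (1 - secondEig (lazyPi G) (lazyP G)) := by
    rw [trelT, add_div, div_self hl.ne']
  rw [hT]
  set g := 1 - secondEig (lazyPi G) (lazyP G)
  suffices h : g * returnFun G x (k + 1) x ≤ returnFun G x k x - returnFun G x (k + 1) x by
    rw [div_div_eq_mul_div, div_le_iff₀ (by positivity)]
    linarith
  rcases Nat.even_or_odd' k with ⟨s, rfl | rfl⟩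
  · refine le_trans ?_ (two_mul s ▸ returnFun_gap_decay_even hd x s)
    exact mul_le_mul_of_nonneg_left (returnFun_self_antitone hd x (Nat.le_succ _)) hl.le
  · have h1 := returnFun_gap_decay_even hd x (s + 1)
    have h2 := returnFun_sub_succ_antitone_odd hd x s
    rw [show s + 1 + (s + 1) = s + s + 2 by ring] at h1
    rw [two_mul]
    exact h1.trans h2

end LazyWalk

theorem mul_sq_le_one_of_cubic_decay {q : ℕ → ℝ} {c : ℝ} (hc0 : 0 ≤ c) (hc : c ≤ 1)
    (h0 : q 0 ≤ 1) {t : ℕ} (hpos : ∀ k ≤ t, 0 < q k)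
    (hdec : ∀ k < t, c * q k ^ 3 ≤ q k - q (k + 1)) : c * (t + 1) * q t ^ 2 ≤ 1 := by
  induction t with
  | zero =>
    have h1 : q 0 ^ 2 ≤ 1 := pow_le_one₀ (hpos 0 le_rfl).le h0
    rw [Nat.cast_zero, zero_add, mul_one]
    exact mul_le_one₀ hc (sq_nonneg _) h1
  | succ t ih =>
    have ih := ih (fun k hk => hpos k (by omega)) fun k hk => hdec k (by omega)
    have ha := hpos t (by omega)
    have hb := hpos (t + 1) le_rfl
    have hd := hdec t (by omega)
    set a := q t
    set b := q (t + 1)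
    have hba : b ≤ a := by linarith [mul_nonneg hc0 (pow_pos ha 3).le]
    have h1 : c * a ^ 2 * b ^ 2 ≤ a ^ 2 - b ^ 2 := by
      calc c * a ^ 2 * b ^ 2 ≤ c * a ^ 2 * (a * (a + b)) := by
            gcongr
            nlinarith
        _ = c * a ^ 3 * (a + b) := by ring
        _ ≤ (a - b) * (a + b) := by gcongr
        _ = a ^ 2 - b ^ 2 := by ring
    have h2 := mul_le_mul_of_nonneg_right ih (sq_nonneg b)
    push_cast
    refine le_of_mul_le_mul_right ?_ (pow_pos ha 2)
    linarith

theorem mul_le_one_of_quadratic_decay {q : ℕ → ℝ} {c : ℝ} (hc0 : 0 ≤ c) (hc : c ≤ 1)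
    (h0 : q 0 ≤ 1) {t : ℕ} (hpos : ∀ k ≤ t, 0 < q k)
    (hdec : ∀ k < t, c * q k ^ 2 ≤ q k - q (k + 1)) : c * (t + 1) * q t ≤ 1 := by
  induction t with
  | zero =>
    rw [Nat.cast_zero, zero_add, mul_one]
    exact mul_le_one₀ hc (hpos 0 le_rfl).le h0
  | succ t ih =>
    have ih := ih (fun k hk => hpos k (by omega)) fun k hk => hdec k (by omega)
    have ha := hpos t (by omega)
    have hb := hpos (t + 1) le_rfl
    have hd := hdec t (by omega)
    set a := q t
    set b := q (t + 1)
    have hba : b ≤ a := by linarith [mul_nonneg hc0 (pow_pos ha 2).le]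
    have h1 : c * a * b ≤ a - b := by
      calc c * a * b ≤ c * a * a := by gcongr
        _ ≤ a - b := by linarith
    have h2 := mul_le_mul_of_nonneg_right ih hb.le
    push_cast
    refine le_of_mul_le_mul_right ?_ ha
    linarith

theorem dminR_le_degree [Fintype V] [Nonempty V] [DecidableEq V] (G : SimpleGraph V)
    [DecidableRel G.Adj] (v : V) : dminR G ≤ G.degree v :=
  inf'_le _ (mem_univ v)

theorem dminR_pos [Fintype V] [Nonempty V] [DecidableEq V] (G : SimpleGraph V)
    [DecidableRel G.Adj] (hd : ∀ v, 0 < G.degree v) : 0 < dminR G :=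
  (lt_inf'_iff _).2 fun v _ => Nat.cast_pos.2 (hd v)

theorem stmt19 [Fintype V] [Nonempty V] [DecidableEq V] (G : SimpleGraph V)
    [DecidableRel G.Adj] (hconn : G.Connected) (hcard : 2 ≤ Fintype.card V)
    (x : V) (t : ℕ) :
    ((lazyP G) ^ t) x x - lazyPi G x ≤
      10 * (G.degree x : ℝ) / dminR G *
        min (1 / Real.sqrt (t+1)) (Real.sqrt (trelT (lazyPi G) (lazyP G) + 1) / (t+1)) := by
  have : Nontrivial V := Fintype.one_lt_card_iff_nontrivial.1 (by omega)
  have hd : ∀ v, 0 < G.degree v := fun v => hconn.preconnected.degree_pos_of_nontrivial v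
  have hδ := dminR_pos G hd
  have hx : (0 : ℝ) < G.degree x := Nat.cast_pos.2 (hd x)
  have hT1 : 1 ≤ trelT (lazyPi G) (lazyP G) + 1 := by
    have := one_div_pos.2 (sub_pos.2 (secondEig_lazyP_lt_one hconn hd))
    unfold trelT
    linarith
  have hT : 0 < trelT (lazyPi G) (lazyP G) + 1 := by linarith
  set T := trelT (lazyPi G) (lazyP G) + 1
  set δ := dminR G
  have ht : (0 : ℝ) < t + 1 := by positivity
  change returnFun G x t x ≤ _
  rcases le_or_gt (returnFun G x t x) 0 with hq | hq
  · exact hq.trans (by positivity)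
  have hpos : ∀ k ≤ t, 0 < returnFun G x k x := fun k hk =>
    hq.trans_le (returnFun_self_antitone hd x hk)
  set c := δ ^ 2 / (96 * (G.degree x : ℝ) ^ 2) with hcdef
  have hc0 : 0 ≤ c := by positivity
  have hc1 : c ≤ 1 := by
    have : δ ^ 2 ≤ (G.degree x : ℝ) ^ 2 := by gcongr; exact dminR_le_degree G x
    exact div_le_one_of_le₀ (by linarith [sq_nonneg (G.degree x : ℝ)]) (by positivity)
  have hcubic : ∀ k < t, c * returnFun G x k x ^ 3 ≤
      returnFun G x k x - returnFun G x (k + 1) x := fun k hk =>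
    returnFun_cubic_decay hconn hd hδ (dminR_le_degree G) x k (hpos k hk.le)
  have hquad : ∀ k < t, √(c / T) * returnFun G x k x ^ 2 ≤
      returnFun G x k x - returnFun G x (k + 1) x := fun k hk => by
    have hk0 := hpos k hk.le
    have h1 := hcubic k hk
    have h2 := returnFun_gap_decay hconn hd x k hk0
    refine le_of_sq_le_sq ?_ (h1.trans' (by positivity))
    calc (√(c / T) * returnFun G x k x ^ 2) ^ 2
        = (c * returnFun G x k x ^ 3) * (returnFun G x k x / T) := by
          rw [mul_pow, Real.sq_sqrt (by positivity)]
          ring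
      _ ≤ (returnFun G x k x - returnFun G x (k + 1) x) *
          (returnFun G x k x - returnFun G x (k + 1) x) :=
          mul_le_mul h1 h2 (by positivity) (h1.trans' (by positivity))
      _ = _ := (sq _).symm
  have h0 := returnFun_self_le_one hd x 0
  have hA := mul_sq_le_one_of_cubic_decay (q := fun k => returnFun G x k x) hc0 hc1 h0 hpos hcubic
  have hB := mul_le_one_of_quadratic_decay (q := fun k => returnFun G x k x)
    (Real.sqrt_nonneg _) (Real.sqrt_le_one.2 (div_le_one_of_le₀ (hc1.trans hT1) hT.le))
    h0 hpos hquad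
  rw [mul_min_of_nonneg _ _ (by positivity)]
  set K := 10 * (G.degree x : ℝ) / δ with hK
  have hcK : 1 ≤ c * K ^ 2 := by
    have : c * K ^ 2 = 100 / 96 := by
      rw [hcdef, hK]
      field_simp
      norm_num
    rw [this]
    norm_num
  have hK0 : 0 < K := by positivity
  clear_value K
  refine le_min ?_ ?_
  · refine le_of_sq_le_sq ?_ (by positivity)
    rw [mul_pow, div_pow, Real.sq_sqrt ht.le, one_pow, mul_one_div, le_div_iff₀ ht]
    calc returnFun G x t x ^ 2 * (t + 1)
        ≤ (c * K ^ 2) * (returnFun G x t x ^ 2 * (t + 1)) :=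
          le_mul_of_one_le_left (by positivity) hcK
      _ = (c * (t + 1) * returnFun G x t x ^ 2) * K ^ 2 := by ring
      _ ≤ K ^ 2 := mul_le_of_le_one_left (sq_nonneg _) hA
  · refine le_of_sq_le_sq ?_ (by positivity)
    have hB2 := pow_le_one₀ (n := 2) (by positivity) hB
    simp only [mul_pow] at hB2
    rw [Real.sq_sqrt (by positivity)] at hB2
    rw [mul_pow, div_pow, Real.sq_sqrt hT.le, mul_div_assoc', le_div_iff₀ (by positivity)]
    calc returnFun G x t x ^ 2 * ((t : ℝ) + 1) ^ 2
        ≤ (c * K ^ 2) * (returnFun G x t x ^ 2 * ((t : ℝ) + 1) ^ 2) :=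
          le_mul_of_one_le_left (by positivity) hcK
      _ = (c / T * ((t : ℝ) + 1) ^ 2 * returnFun G x t x ^ 2) * (K ^ 2 * T) := by
          field_simp
      _ ≤ K ^ 2 * T := mul_le_of_le_one_left (by positivity) hB2
end
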